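/- arXiv:2105.09037 — 4 statements merged into one kernel-verified Lean document; each statement's English description precedes it below -/
import Mathlib

section
/- Fix θ ∈ [0, π/2]. For finite families of unit vectors u_1,…,u_M and v_1,…,v_N in ℝ³, let P[u,v] be the behaviour P(a,b|x,y) = (1/4)·(1 + a·cosθ·(u_x)_3 + b·cosθ·(v_y)_3 + a·b·[(u_x)_3·(v_y)_3 + sinθ·((u_x)_1·(v_y)_1 − (u_x)_2·(v_y)_2)]), and let μ(u,v) denote the supremum of p ∈ [0,1] such that P[u,v] = p·P_L + (1−p)·Q pointwise for some behaviour P_L admitting an LHV+FHV model and some behaviour Q. Then the infimum of μ(u,v) over all M, N and all choices of unit vectors u_1,…,u_M, v_1,…,v_N equals cos θ. -/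
open scoped BigOperators Classical
open Finset

noncomputable section

/-- The real value `±1` associated with a Boolean outcome. -/
def outVal (a : Bool) : ℝ := if a then 1 else -1

/-- A behaviour: nonnegative probabilities summing to one for every pair of settings. -/
def IsBehaviour {M N : ℕ} (P : Bool → Bool → Fin M → Fin N → ℝ) : Prop :=
  (∀ a b x y, 0 ≤ P a b x y) ∧ (∀ x y, ∑ a, ∑ b, P a b x y = 1)

/-- A behaviour admits an LHV+FHV model (is local-free). -/
def LocalFree {M N : ℕ} (P : Bool → Bool → Fin M → Fin N → ℝ) : Prop :=
  ∃ (n : ℕ) (q : Fin n → ℝ) (A : Bool → Fin M → Fin n → ℝ) (B : Bool → Fin N → Fin n → ℝ),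
    (∀ l, 0 ≤ q l) ∧ (∑ l, q l = 1) ∧
    (∀ a x l, 0 ≤ A a x l) ∧ (∀ x l, ∑ a, A a x l = 1) ∧
    (∀ b y l, 0 ≤ B b y l) ∧ (∀ y l, ∑ b, B b y l = 1) ∧
    (∀ a b x y, P a b x y = ∑ l, q l * A a x l * B b y l)

/-- The quantum behaviour of the pure two-qubit state `cos(θ/2)|00⟩ + sin(θ/2)|11⟩`
under projective spin measurements along unit vectors `u x` and `v y`. -/
def qBehaviour {M N : ℕ} (θ : ℝ) (u : Fin M → EuclideanSpace ℝ (Fin 3))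
    (v : Fin N → EuclideanSpace ℝ (Fin 3)) : Bool → Bool → Fin M → Fin N → ℝ :=
  fun a b x y => (1 / 4) *
    (1 + outVal a * Real.cos θ * u x 2 + outVal b * Real.cos θ * v y 2 +
      outVal a * outVal b *
        (u x 2 * v y 2 + Real.sin θ * (u x 0 * v y 0 - u x 1 * v y 1)))

/-!
Gnomonic projection of the sphere from its centre embeds `ℝ³` linearly and isometrically into some
`L¹(μ)`, with the third basis vector `e` going to the constant `1`. The quantum correlator along `u`
and `v` is `⟪u, w⟫` for a vector `w` depending on `v`, and `‖w ± cos θ • e‖ = 1 ± cos θ * v 2`. The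
first party answers with the sign of the image of `u`, so that averaging against her answer is the
gradient of the norm at `u`, namely `⟪u, ·⟫`; the second party answers with mean `b`, where
`cos θ * b` is the image of `w` truncated to `[-cos θ, cos θ]`. Up to the factor `cos θ` this local
model has the quantum means, and the `L¹` distance from `cos θ * b` to the image of `w` is
`1 - cos θ`. This is how close to the quantum correlators the rescaled local ones must be for the
remainder, of weight `1 - cos θ`, to be nonnegative.

Conversely, under a local model the probability of unequal outcomes satisfies the triangle
inequality along a chain of directions measured alternately by the two parties. Along a meridian,
from near one pole to near the other, the quantum outcomes at the two ends are almost always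
unequal, so the weight of the local model cannot much exceed the sum of the quantum probabilities
over the steps. In the coordinate `x` for which the height is `tanh x`, a step of length `δ` has
probability `(cosh δ - sin θ) / sinh δ` times half the increase of height, and this adds up to at
most `tanh δ` as soon as `1 ≤ sin θ * cosh δ`, that is, as soon as `cos θ ≤ tanh δ`.
-/

open MeasureTheory Metric
open scoped InnerProductSpace

/-! ### Linear isometries into `L¹` -/

/-- A linear isometry of `E` into `L¹(μ)`, given by everywhere defined functions `f w` rather than
by their classes modulo `μ`. -/
structure IsL1Isometry {E Ω : Type*} [SeminormedAddCommGroup E] [Module ℝ E] [MeasurableSpace Ω]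
    (μ : Measure Ω) (f : E →ₗ[ℝ] Ω → ℝ) : Prop where
  measurable (w : E) : Measurable (f w)
  integrable (w : E) : Integrable (f w) μ
  integral_abs (w : E) : ∫ ω, |f w ω| ∂μ = ‖w‖

namespace IsL1Isometry

variable {E Ω : Type*} [SeminormedAddCommGroup E] [InnerProductSpace ℝ E] [MeasurableSpace Ω]
  {μ : Measure Ω} {f : E →ₗ[ℝ] Ω → ℝ} {σ : Ω → ℝ} {w : E}

theorem norm_add_mul_integral_le (hf : IsL1Isometry μ f) (hσ : Measurable σ)
    (hσ_le : ∀ ω, |σ ω| ≤ 1) (hσw : ∀ ω, σ ω * f w ω = |f w ω|) (w' : E) (t : ℝ) :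
    ‖w‖ + t * ∫ ω, σ ω * f w' ω ∂μ ≤ ‖w + t • w'‖ := by
  have hσf (x : E) : Integrable (fun ω => σ ω * f x ω) μ :=
    (hf.integrable x).bdd_mul hσ.aestronglyMeasurable (.of_forall hσ_le)
  calc ‖w‖ + t * ∫ ω, σ ω * f w' ω ∂μ
      = ∫ ω, σ ω * f (w + t • w') ω ∂μ := by
        rw [← hf.integral_abs w, ← integral_const_mul,
          ← integral_add (hf.integrable w).abs ((hσf w').const_mul t)]
        refine integral_congr_ae (.of_forall fun ω => ?_)
        simp only [← hσw, map_add, map_smul, Pi.add_apply, Pi.smul_apply, smul_eq_mul]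
        ring
    _ ≤ ∫ ω, |f (w + t • w') ω| ∂μ := by
        refine integral_mono (hσf _) (hf.integrable _).abs fun ω => (le_abs_self _).trans ?_
        rw [abs_mul]
        exact mul_le_of_le_one_left (abs_nonneg _) (hσ_le ω)
    _ = ‖w + t • w'‖ := hf.integral_abs _

/-- The functional `w' ↦ ∫ σ * f w'` is a subgradient of the norm at `w`, and the norm of an inner
product space has only one. -/
theorem norm_mul_integral_mul (hf : IsL1Isometry μ f) (hσ : Measurable σ)
    (hσ_le : ∀ ω, |σ ω| ≤ 1) (hσw : ∀ ω, σ ω * f w ω = |f w ω|) (w' : E) :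
    ‖w‖ * ∫ ω, σ ω * f w' ω ∂μ = ⟪w, w'⟫_ℝ := by
  set I := ∫ ω, σ ω * f w' ω ∂μ
  have hquad (t : ℝ) : 0 ≤ ‖w'‖ ^ 2 / 2 * (t * t) + (⟪w, w'⟫_ℝ - ‖w‖ * I) * t + 0 := by
    have hsub := mul_le_mul_of_nonneg_left
      (hf.norm_add_mul_integral_le hσ hσ_le hσw w' t) (norm_nonneg w)
    have hsq : ‖w + t • w'‖ ^ 2 = ‖w‖ ^ 2 + 2 * (t * ⟪w, w'⟫_ℝ) + t ^ 2 * ‖w'‖ ^ 2 := by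
      rw [norm_add_sq_real, inner_smul_right, norm_smul, mul_pow, Real.norm_eq_abs, sq_abs]
    linarith [two_mul_le_add_sq ‖w‖ ‖w + t • w'‖]
  have hdiscrim := discrim_le_zero hquad
  simp only [discrim, mul_zero, sub_zero] at hdiscrim
  linarith [pow_eq_zero_iff two_ne_zero |>.1 (hdiscrim.antisymm (sq_nonneg _))]

end IsL1Isometry

/-! ### The gnomonic isometry -/

section Gnomonic

variable {E : Type*} [NormedAddCommGroup E] [InnerProductSpace ℝ E]

/-- Gnomonic coordinates: `w` becomes the function `n ↦ ⟪w, n⟫ / ⟪e, n⟫` on directions `n`, so that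
`e` becomes the constant `1` (except for the junk value `0` on the hyperplane `eᗮ`). -/
def gnomonic (e : E) : E →ₗ[ℝ] E → ℝ where
  toFun w n := ⟪w, n⟫_ℝ / ⟪e, n⟫_ℝ
  map_add' w w' := by ext n; simp [inner_add_left, add_div]
  map_smul' t w := by ext n; simp [inner_smul_left, mul_div_assoc]

variable [MeasurableSpace E] [BorelSpace E] [FiniteDimensional ℝ E]

/-- The law on the unit ball with density proportional to `|⟪e, n⟫|`. This weight cancels the
denominator of `gnomonic e`, and the ball may be replaced by any rotation-invariant law. -/
def gnomonicMeasure (e : E) : Measure E :=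
  (volume.restrict (ball 0 1)).withDensity
    fun n => ENNReal.ofReal (|⟪e, n⟫_ℝ| / ∫ n in ball 0 1, |⟪e, n⟫_ℝ|)

theorem integrableOn_ball_abs_inner (w : E) :
    IntegrableOn (fun n => |⟪w, n⟫_ℝ|) (ball 0 1) := by
  have hcont : Continuous fun n : E => |⟪w, n⟫_ℝ| := by fun_prop
  exact (hcont.continuousOn.integrableOn_compact (isCompact_closedBall 0 1)).mono_set
    ball_subset_closedBall

theorem setIntegral_ball_abs_inner_eq_of_norm_eq {w w' : E} (h : ‖w‖ = ‖w'‖) :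
    ∫ n in ball (0 : E) 1, |⟪w, n⟫_ℝ| = ∫ n in ball (0 : E) 1, |⟪w', n⟫_ℝ| := by
  set L := (ℝ ∙ (w - w'))ᗮ.reflection
  have hL : L w = w' := Submodule.reflection_sub h
  have hball : L ⁻¹' ball 0 1 = ball 0 1 := by ext n; simp
  calc ∫ n in ball (0 : E) 1, |⟪w, n⟫_ℝ|
      = ∫ n in L ⁻¹' ball 0 1, |⟪w', L n⟫_ℝ| := by simp_rw [hball, ← hL, L.inner_map_map]
    _ = ∫ n in ball (0 : E) 1, |⟪w', n⟫_ℝ| :=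
        L.measurePreserving.setIntegral_preimage_emb L.toMeasurableEquiv.measurableEmbedding
          (fun n => |⟪w', n⟫_ℝ|) _

theorem setIntegral_ball_abs_inner {e : E} (he : ‖e‖ = 1) (w : E) :
    ∫ n in ball (0 : E) 1, |⟪w, n⟫_ℝ| = ‖w‖ * ∫ n in ball (0 : E) 1, |⟪e, n⟫_ℝ| := by
  have h : ‖w‖ = ‖‖w‖ • e‖ := by rw [norm_smul, he, norm_norm, mul_one]
  rw [setIntegral_ball_abs_inner_eq_of_norm_eq h, ← integral_const_mul]
  simp_rw [real_inner_smul_left, abs_mul, abs_norm]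

theorem setIntegral_ball_abs_inner_pos {e : E} (he : e ≠ 0) :
    0 < ∫ n in ball (0 : E) 1, |⟪e, n⟫_ℝ| := by
  rw [setIntegral_pos_iff_support_of_nonneg_ae (.of_forall fun _ => abs_nonneg _)
    (integrableOn_ball_abs_inner e)]
  have hcont : Continuous fun n : E => |⟪e, n⟫_ℝ| := by fun_prop
  refine (hcont.isOpen_support.inter isOpen_ball).measure_pos volume
    ⟨(2 * ‖e‖)⁻¹ • e, ?_, ?_⟩
  · simp [inner_smul_right, he]
  · have : 0 < ‖e‖ := norm_pos_iff.2 he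
    rw [mem_ball_zero_iff, norm_smul, norm_inv, norm_mul, norm_norm, Real.norm_two]
    field_simp
    norm_num

theorem ae_inner_ne_zero {e : E} (he : e ≠ 0) : ∀ᵐ n : E, ⟪e, n⟫_ℝ ≠ 0 := by
  have hne : (ℝ ∙ e)ᗮ ≠ ⊤ := by
    rwa [Ne, Submodule.orthogonal_eq_top_iff, Submodule.span_singleton_eq_bot]
  have hset : {n : E | ¬ ⟪e, n⟫_ℝ ≠ 0} = (ℝ ∙ e)ᗮ := by
    ext n; simp [Submodule.mem_orthogonal_singleton_iff_inner_right]
  rw [ae_iff, hset]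
  exact Measure.addHaar_submodule volume _ hne

theorem measurable_gnomonicDensity (e : E) :
    Measurable fun n : E => ENNReal.ofReal (|⟪e, n⟫_ℝ| / ∫ n in ball (0 : E) 1, |⟪e, n⟫_ℝ|) := by
  fun_prop

theorem isProbabilityMeasure_gnomonicMeasure {e : E} (he : e ≠ 0) :
    IsProbabilityMeasure (gnomonicMeasure e) where
  measure_univ := by
    have hpos := setIntegral_ball_abs_inner_pos he
    rw [gnomonicMeasure, withDensity_apply _ .univ, Measure.restrict_univ,
      ← ofReal_integral_eq_lintegral_ofReal ((integrableOn_ball_abs_inner e).div_const _)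
        (.of_forall fun n => by positivity), integral_div, div_self hpos.ne', ENNReal.ofReal_one]

theorem gnomonic_self_ae_eq_one (e : E) : ∀ᵐ n ∂gnomonicMeasure e, gnomonic e e n = 1 := by
  rw [gnomonicMeasure, ae_withDensity_iff (measurable_gnomonicDensity e)]
  refine .of_forall fun n hn => div_self fun h => hn ?_
  simp [h]

theorem isL1Isometry_gnomonic {e : E} (he : ‖e‖ = 1) :
    IsL1Isometry (gnomonicMeasure e) (gnomonic e) := by
  have he0 : e ≠ 0 := norm_ne_zero_iff.1 (he ▸ one_ne_zero)
  set C := ∫ n in ball (0 : E) 1, |⟪e, n⟫_ℝ|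
  have hC0 : 0 < C := setIntegral_ball_abs_inner_pos he0
  have hmeas (w : E) : Measurable (gnomonic e w) := by
    change Measurable fun n : E => ⟪w, n⟫_ℝ / ⟪e, n⟫_ℝ
    fun_prop
  have hdens (w : E) : ∀ᵐ n ∂volume.restrict (ball (0 : E) 1),
      (ENNReal.ofReal (|⟪e, n⟫_ℝ| / C)).toReal • |gnomonic e w n| = |⟪w, n⟫_ℝ| / C := by
    filter_upwards [ae_restrict_of_ae (ae_inner_ne_zero he0)] with n hn
    have := abs_pos.2 hn
    change _ • |⟪w, n⟫_ℝ / ⟪e, n⟫_ℝ| = _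
    rw [ENNReal.toReal_ofReal (by positivity), abs_div, smul_eq_mul]
    field_simp
  refine ⟨hmeas, fun w => ?_, fun w => ?_⟩
  · rw [← integrable_norm_iff (hmeas w).aestronglyMeasurable, gnomonicMeasure,
      integrable_withDensity_iff_integrable_smul' (measurable_gnomonicDensity e)
        (.of_forall fun _ => ENNReal.ofReal_lt_top)]
    exact ((integrableOn_ball_abs_inner w).div_const C).congr
      ((hdens w).mono fun _ h => h.symm)
  · rw [gnomonicMeasure, integral_withDensity_eq_integral_toReal_smul
      (measurable_gnomonicDensity e) (.of_forall fun _ => ENNReal.ofReal_lt_top),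
      integral_congr_ae (hdens w), integral_div, setIntegral_ball_abs_inner he,
      mul_div_cancel_right₀ _ hC0.ne']

end Gnomonic

/-! ### Truncation -/

/-- The quotient `t / c` truncated to `[-1, 1]`; it is `0` when `c = 0`. -/
def truncate (c t : ℝ) : ℝ := (|t + c| - |t - c|) / (2 * c)

theorem continuous_truncate (c : ℝ) : Continuous (truncate c) := by
  unfold truncate
  fun_prop

theorem mul_truncate (c t : ℝ) : c * truncate c t = (|t + c| - |t - c|) / 2 := by
  rcases eq_or_ne c 0 with rfl | hc
  · simp
  · rw [truncate]
    field_simp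

theorem abs_truncate_le_one {c : ℝ} (hc : 0 ≤ c) (t : ℝ) : |truncate c t| ≤ 1 := by
  rw [truncate, abs_div, abs_of_nonneg (by positivity : 0 ≤ 2 * c)]
  refine div_le_one_of_le₀ ((abs_abs_sub_abs_le_abs_sub _ _).trans ?_) (by positivity)
  rw [add_sub_sub_cancel, ← two_mul, abs_of_nonneg (by positivity)]

theorem abs_sub_mul_truncate {c : ℝ} (hc : 0 ≤ c) (t : ℝ) :
    |t - c * truncate c t| = (|t + c| + |t - c|) / 2 - c := by
  rw [mul_truncate]
  cases abs_cases (t + c) <;> cases abs_cases (t - c) <;>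
    cases abs_cases (t - (|t + c| - |t - c|) / 2) <;> linarith

namespace IsL1Isometry

variable {E Ω : Type*} [SeminormedAddCommGroup E] [InnerProductSpace ℝ E] [MeasurableSpace Ω]
  {μ : Measure Ω} {f : E →ₗ[ℝ] Ω → ℝ} {e w : E} {c : ℝ}

theorem integral_abs_add_const (hf : IsL1Isometry μ f) (he : ∀ᵐ ω ∂μ, f e ω = 1) (w : E)
    (c : ℝ) : ∫ ω, |f w ω + c| ∂μ = ‖w + c • e‖ := by
  rw [← hf.integral_abs]
  refine integral_congr_ae (he.mono fun ω hω => ?_)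
  simp only [map_add, map_smul, Pi.add_apply, Pi.smul_apply, hω, smul_eq_mul, mul_one]

theorem integral_abs_sub_const (hf : IsL1Isometry μ f) (he : ∀ᵐ ω ∂μ, f e ω = 1) (w : E)
    (c : ℝ) : ∫ ω, |f w ω - c| ∂μ = ‖w - c • e‖ := by
  simpa only [neg_smul, ← sub_eq_add_neg] using hf.integral_abs_add_const he w (-c)

theorem integrable_abs_add_const [IsFiniteMeasure μ] (hf : IsL1Isometry μ f) (w : E) (c : ℝ) :
    Integrable (fun ω => |f w ω + c|) μ :=
  ((hf.integrable w).add (integrable_const c)).abs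

theorem integrable_abs_sub_const [IsFiniteMeasure μ] (hf : IsL1Isometry μ f) (w : E) (c : ℝ) :
    Integrable (fun ω => |f w ω - c|) μ :=
  ((hf.integrable w).sub (integrable_const c)).abs

theorem mul_integral_truncate [IsFiniteMeasure μ] (hf : IsL1Isometry μ f)
    (he : ∀ᵐ ω ∂μ, f e ω = 1) (w : E) (c : ℝ) :
    c * ∫ ω, truncate c (f w ω) ∂μ = (‖w + c • e‖ - ‖w - c • e‖) / 2 := by
  simp_rw [← integral_const_mul, mul_truncate]
  rw [integral_div, integral_sub (hf.integrable_abs_add_const w c)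
    (hf.integrable_abs_sub_const w c), hf.integral_abs_add_const he,
    hf.integral_abs_sub_const he]

theorem integral_abs_sub_mul_truncate [IsProbabilityMeasure μ] (hf : IsL1Isometry μ f)
    (he : ∀ᵐ ω ∂μ, f e ω = 1) (w : E) (hc : 0 ≤ c) :
    ∫ ω, |f w ω - c * truncate c (f w ω)| ∂μ = (‖w + c • e‖ + ‖w - c • e‖) / 2 - c := by
  have hadd := hf.integrable_abs_add_const w c
  have hsub := hf.integrable_abs_sub_const w c
  have hmean : Integrable (fun ω => (|f w ω + c| + |f w ω - c|) / 2) μ :=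
    (hadd.add hsub).div_const 2
  simp_rw [abs_sub_mul_truncate hc]
  rw [integral_sub hmean (integrable_const c), integral_div,
    integral_add hadd hsub, hf.integral_abs_add_const he, hf.integral_abs_sub_const he]
  simp

theorem abs_inner_sub_mul_integral_truncate_le [IsProbabilityMeasure μ] (hf : IsL1Isometry μ f)
    (he : ∀ᵐ ω ∂μ, f e ω = 1) (hc : 0 ≤ c) {σ : Ω → ℝ} (hσ : Measurable σ)
    (hσ_le : ∀ ω, |σ ω| ≤ 1) (hσw : ∀ ω, σ ω * f w ω = |f w ω|) (hw : ‖w‖ = 1) (w' : E) :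
    |⟪w, w'⟫_ℝ - c * ∫ ω, σ ω * truncate c (f w' ω) ∂μ| ≤
      (‖w' + c • e‖ + ‖w' - c • e‖) / 2 - c := by
  have htrunc : Integrable (fun ω => truncate c (f w' ω)) μ :=
    .of_bound ((continuous_truncate c).measurable.comp (hf.measurable w')).aestronglyMeasurable 1
      (.of_forall fun _ => abs_truncate_le_one hc _)
  have hdiff : Integrable (fun ω => f w' ω - c * truncate c (f w' ω)) μ :=
    (hf.integrable w').sub (htrunc.const_mul c)
  have hbdd {g : Ω → ℝ} (hg : Integrable g μ) : Integrable (fun ω => σ ω * g ω) μ :=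
    hg.bdd_mul hσ.aestronglyMeasurable (.of_forall hσ_le)
  rw [← hf.integral_abs_sub_mul_truncate he w' hc, ← hf.norm_mul_integral_mul hσ hσ_le hσw, hw,
    one_mul, ← integral_const_mul,
    ← integral_sub (hbdd (hf.integrable w')) ((hbdd htrunc).const_mul c)]
  simp_rw [mul_left_comm c, ← mul_sub]
  refine abs_integral_le_integral_abs.trans
    (integral_mono (hbdd hdiff).abs hdiff.abs fun ω => ?_)
  rw [abs_mul]
  exact mul_le_of_le_one_left (abs_nonneg _) (hσ_le ω)

end IsL1Isometry

/-! ### Local-free behaviours -/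

section Behaviours

variable {M N : ℕ} {P : Bool → Bool → Fin M → Fin N → ℝ}

theorem LocalFree.isBehaviour (h : LocalFree P) : IsBehaviour P := by
  obtain ⟨n, q, A, B, hq, hq_sum, hA, hA_sum, hB, hB_sum, hP⟩ := h
  refine ⟨fun a b x y => ?_, fun x y => ?_⟩
  · rw [hP]
    exact sum_nonneg fun l _ => mul_nonneg (mul_nonneg (hq l) (hA _ _ _)) (hB _ _ _)
  · calc ∑ a, ∑ b, P a b x y
        = ∑ l, q l * (∑ a, A a x l) * ∑ b, B b y l := by
          simp only [Fintype.sum_bool, hP, ← sum_add_distrib]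
          exact sum_congr rfl fun l _ => by ring
      _ = 1 := by simp only [hA_sum, hB_sum, mul_one, hq_sum]

/-- Bayes' rule: the second party's responses may be given jointly with the hidden variable, as
`D b y l = q l * B b y l`. -/
theorem localFree_of_joint {Λ : Type*} [Fintype Λ] {q : Λ → ℝ} {A : Bool → Fin M → Λ → ℝ}
    {D : Bool → Fin N → Λ → ℝ} (hq : ∀ l, 0 ≤ q l) (hq_sum : ∑ l, q l = 1)
    (hA : ∀ a x l, 0 ≤ A a x l) (hA_sum : ∀ x l, ∑ a, A a x l = 1)
    (hD : ∀ b y l, 0 ≤ D b y l) (hD_sum : ∀ y l, ∑ b, D b y l = q l) :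
    LocalFree fun a b x y => ∑ l, A a x l * D b y l := by
  -- The conditional response at a null value of the hidden variable is irrelevant.
  set B : Bool → Fin N → Λ → ℝ := fun b y l => if q l = 0 then 1 / 2 else D b y l / q l with hBdef
  have hB (b y l) : 0 ≤ B b y l := by
    simp only [hBdef]
    split_ifs
    exacts [by norm_num, div_nonneg (hD b y l) (hq l)]
  have hB_sum (y l) : ∑ b, B b y l = 1 := by
    by_cases hl : q l = 0
    · simp only [hBdef, hl, if_true, Fintype.sum_bool]
      norm_num
    · simp only [hBdef, hl, if_false, ← sum_div, hD_sum, div_self hl]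
  have hqB (b y l) : q l * B b y l = D b y l := by
    by_cases hl : q l = 0
    · have hDl := hD_sum y l
      rw [hl, sum_eq_zero_iff_of_nonneg fun b _ => hD b y l] at hDl
      rw [hl, zero_mul, hDl b (mem_univ b)]
    · simp only [hBdef, hl, if_false, mul_div_cancel₀ _ hl]
  let i := (Fintype.equivFin Λ).symm
  refine ⟨Fintype.card Λ, q ∘ i, fun a x => A a x ∘ i, fun b y => B b y ∘ i, fun l => hq _,
    (i.sum_comp q).trans hq_sum, fun a x l => hA .., fun x l => hA_sum .., fun b y l => hB ..,
    fun y l => hB_sum .., fun a b x y => ?_⟩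
  change ∑ l, A a x l * D b y l = _
  rw [← i.sum_comp fun l => A a x l * D b y l]
  refine sum_congr rfl fun l _ => ?_
  simp only [← hqB, Function.comp_apply]
  ring

theorem sum_setIntegral_preimage_singleton {Ω ι : Type*} [MeasurableSpace Ω] {μ : Measure Ω}
    [Fintype ι] {φ : Ω → ι} (hφ : ∀ i, MeasurableSet (φ ⁻¹' {i})) {F : Ω → ℝ}
    (hF : Integrable F μ) : ∑ i, ∫ ω in φ ⁻¹' {i}, F ω ∂μ = ∫ ω, F ω ∂μ := by
  rw [← integral_iUnion_fintype hφ (fun i j hij => ?_) fun i => hF.integrableOn]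
  · rw [← Set.preimage_iUnion, Set.iUnion_of_singleton, Set.preimage_univ, setIntegral_univ]
  · exact Disjoint.preimage φ (Set.disjoint_singleton.2 hij)

/-- There are finitely many settings, so the hidden variable may be replaced by the list of all the
answers of the first party, the response of the second party being averaged over each list. -/
theorem localFree_of_hiddenVariable {Ω : Type*} [MeasurableSpace Ω] (μ : Measure Ω)
    [IsProbabilityMeasure μ] {f : Fin M → Ω → Bool} {g : Bool → Fin N → Ω → ℝ}
    (hf : ∀ x, Measurable (f x)) (hg : ∀ b y, Integrable (g b y) μ) (hg0 : ∀ b y ω, 0 ≤ g b y ω)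
    (hg_sum : ∀ y ω, ∑ b, g b y ω = 1) :
    LocalFree fun a b x y => ∫ ω, (if f x ω = a then g b y ω else 0) ∂μ := by
  let S (σ : Fin M → Bool) : Set Ω := (fun ω x => f x ω) ⁻¹' {σ}
  have hS (σ) : MeasurableSet (S σ) := measurable_pi_lambda _ hf (measurableSet_singleton σ)
  have hresp (a b x y) : Integrable (fun ω => if f x ω = a then g b y ω else 0) μ :=
    ((hg b y).indicator (hf x (measurableSet_singleton a))).congr
      (.of_forall fun ω => by simp only [Set.indicator, Set.mem_preimage, Set.mem_singleton_iff])
  convert localFree_of_joint (q := fun σ => μ.real (S σ))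
    (A := fun a x σ => if σ x = a then 1 else 0) (D := fun b y σ => ∫ ω in S σ, g b y ω ∂μ)
    (fun σ => measureReal_nonneg) ?_ (fun a x σ => by positivity) (fun x σ => by simp)
    (fun b y σ => integral_nonneg fun ω => hg0 b y ω) (fun y σ => ?_) using 5 with a b x y
  · rw [← sum_setIntegral_preimage_singleton hS (hresp a b x y)]
    refine sum_congr rfl fun σ _ => ?_
    rw [← integral_const_mul]
    refine setIntegral_congr_fun (hS σ) fun ω hω => ?_
    simp only [← (congrFun hω x : f x ω = σ x), ite_mul, one_mul, zero_mul]
  · simpa using sum_setIntegral_preimage_singleton (μ := μ) hS (integrable_const (1 : ℝ))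
  · rw [← integral_finsetSum _ fun b _ => (hg b y).integrableOn]
    simp only [hg_sum]
    simp

/-- The behaviour with given mean outcomes `α`, `β` and correlators `E`. -/
def momentBehaviour (α : Fin M → ℝ) (β : Fin N → ℝ) (E : Fin M → Fin N → ℝ) :
    Bool → Bool → Fin M → Fin N → ℝ :=
  fun a b x y =>
    (1 / 4) * (1 + outVal a * α x + outVal b * β y + outVal a * outVal b * E x y)

theorem qBehaviour_eq_momentBehaviour (θ : ℝ) (u : Fin M → EuclideanSpace ℝ (Fin 3))
    (v : Fin N → EuclideanSpace ℝ (Fin 3)) :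
    qBehaviour θ u v = momentBehaviour (fun x => Real.cos θ * u x 2) (fun y => Real.cos θ * v y 2)
      (fun x y => u x 2 * v y 2 + Real.sin θ * (u x 0 * v y 0 - u x 1 * v y 1)) := by
  funext a b x y
  simp only [qBehaviour, momentBehaviour, mul_assoc]

theorem sum_momentBehaviour (α : Fin M → ℝ) (β : Fin N → ℝ) (E : Fin M → Fin N → ℝ) (x : Fin M)
    (y : Fin N) : ∑ a, ∑ b, momentBehaviour α β E a b x y = 1 := by
  simp only [momentBehaviour, outVal, Fintype.sum_bool, if_true, Bool.false_eq_true, if_false]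
  ring

theorem mul_momentBehaviour_le {α : Fin M → ℝ} {β : Fin N → ℝ} {E E' : Fin M → Fin N → ℝ} {p : ℝ}
    (hE : ∀ x y, |E' x y - p * E x y| ≤ 1 - p) (a b : Bool) (x : Fin M) (y : Fin N) :
    p * momentBehaviour α β E a b x y ≤
      momentBehaviour (fun x => p * α x) (fun y => p * β y) E' a b x y := by
  obtain ⟨hlower, hupper⟩ := abs_le.1 (hE x y)
  cases a <;> cases b <;>
    simp only [momentBehaviour, outVal, if_true, Bool.false_eq_true, if_false] <;> linarith

theorem integral_momentBehaviour {Ω : Type*} [MeasurableSpace Ω] {μ : Measure Ω}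
    [IsProbabilityMeasure μ] {α : Fin M → Ω → ℝ} {β : Fin N → Ω → ℝ} {E : Fin M → Fin N → Ω → ℝ}
    (hα : ∀ x, Integrable (α x) μ) (hβ : ∀ y, Integrable (β y) μ)
    (hE : ∀ x y, Integrable (E x y) μ) (a b : Bool) (x : Fin M) (y : Fin N) :
    ∫ ω, momentBehaviour (α · ω) (β · ω) (E · · ω) a b x y ∂μ =
      momentBehaviour (∫ ω, α · ω ∂μ) (∫ ω, β · ω ∂μ) (∫ ω, E · · ω ∂μ) a b x y := by
  have hα' : Integrable (fun ω => 1 + outVal a * α x ω) μ :=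
    (integrable_const 1).add ((hα x).const_mul _)
  have hβ' : Integrable (fun ω => 1 + outVal a * α x ω + outVal b * β y ω) μ :=
    hα'.add ((hβ y).const_mul _)
  simp only [momentBehaviour]
  rw [integral_const_mul, integral_add hβ' ((hE x y).const_mul _),
    integral_add hα' ((hβ y).const_mul _), integral_add (integrable_const 1) ((hα x).const_mul _)]
  simp [integral_const_mul]

theorem abs_outVal (a : Bool) : |outVal a| = 1 := by
  cases a <;> simp [outVal]

theorem localFree_momentBehaviour {Ω : Type*} [MeasurableSpace Ω] (μ : Measure Ω)
    [IsProbabilityMeasure μ] {f : Fin M → Ω → Bool} {β : Fin N → Ω → ℝ}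
    (hf : ∀ x, Measurable (f x)) (hβ : ∀ y, Measurable (β y)) (hβ_le : ∀ y ω, |β y ω| ≤ 1) :
    LocalFree (momentBehaviour (fun x => ∫ ω, outVal (f x ω) ∂μ) (fun y => ∫ ω, β y ω ∂μ)
      (fun x y => ∫ ω, outVal (f x ω) * β y ω ∂μ)) := by
  have hf_int (x) : Integrable (fun ω => outVal (f x ω)) μ :=
    .of_bound ((measurable_of_finite outVal).comp (hf x)).aestronglyMeasurable 1
      (.of_forall fun ω => (abs_outVal _).le)
  have hβ_int (y) : Integrable (β y) μ :=
    .of_bound (hβ y).aestronglyMeasurable 1 (.of_forall (hβ_le y))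
  have hfβ_int (x y) : Integrable (fun ω => outVal (f x ω) * β y ω) μ :=
    (hβ_int y).bdd_mul (hf_int x).aestronglyMeasurable (.of_forall fun ω => (abs_outVal _).le)
  convert localFree_of_hiddenVariable μ (g := fun b y ω => (1 + outVal b * β y ω) / 2) hf
    (fun b y => ((integrable_const 1).add ((hβ_int y).const_mul _)).div_const 2) (fun b y ω => ?_)
    (fun y ω => ?_) using 5 with a b x y
  · rw [← integral_momentBehaviour hf_int hβ_int hfβ_int]
    refine integral_congr_ae (.of_forall fun ω => ?_)
    rcases hfx : f x ω <;> cases a <;> cases b <;>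
      simp only [momentBehaviour, outVal, hfx, if_true, if_false, reduceCtorEq] <;> ring
  · have hle : |outVal b * β y ω| ≤ 1 := by rw [abs_mul, abs_outVal, one_mul]; exact hβ_le y ω
    linarith [neg_le_of_abs_le hle]
  · simp only [Fintype.sum_bool, outVal, if_true, Bool.false_eq_true, if_false]
    ring

theorem outVal_decide_nonneg_mul (t : ℝ) : outVal (decide (0 ≤ t)) * t = |t| := by
  rcases le_or_gt 0 t with ht | ht
  · simp [outVal, ht, abs_of_nonneg]
  · simp [outVal, ht.not_ge, abs_of_neg ht]

/-- The first party answers with the sign of the coordinate of `u x`, the second party with mean the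
truncated coordinate of `w y`. -/
theorem exists_localFree_abs_inner_sub_le {E : Type*} [NormedAddCommGroup E]
    [InnerProductSpace ℝ E] [FiniteDimensional ℝ E] {e : E} (he : ‖e‖ = 1) {c : ℝ} (hc : 0 ≤ c)
    {u : Fin M → E} (hu : ∀ x, ‖u x‖ = 1) (w : Fin N → E) :
    ∃ (β : Fin N → ℝ) (C : Fin M → Fin N → ℝ),
      LocalFree (momentBehaviour (fun x => ⟪u x, e⟫_ℝ) β C) ∧
      (∀ y, c * β y = (‖w y + c • e‖ - ‖w y - c • e‖) / 2) ∧
      ∀ x y, |⟪u x, w y⟫_ℝ - c * C x y| ≤ (‖w y + c • e‖ + ‖w y - c • e‖) / 2 - c := by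
  borelize E
  have hf := isL1Isometry_gnomonic he
  have hfe := gnomonic_self_ae_eq_one e
  have := isProbabilityMeasure_gnomonicMeasure (norm_ne_zero_iff.1 (he ▸ one_ne_zero))
  let answer (x : Fin M) (n : E) : Bool := decide (0 ≤ gnomonic e (u x) n)
  have hanswer (x) : Measurable (answer x) := measurable_to_bool <| by
    simpa [Set.preimage, answer] using measurableSet_le measurable_const (hf.measurable (u x))
  have hsign (x) : Measurable fun n => outVal (answer x n) :=
    (measurable_of_finite outVal).comp (hanswer x)
  have hmean (x) : ∫ n, outVal (answer x n) ∂gnomonicMeasure e = ⟪u x, e⟫_ℝ := by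
    rw [← hf.norm_mul_integral_mul (hsign x) (fun n => (abs_outVal _).le)
      (fun n => outVal_decide_nonneg_mul _), hu, one_mul]
    exact integral_congr_ae (hfe.mono fun n hn => by simp only [hn, mul_one])
  refine ⟨fun y => ∫ n, truncate c (gnomonic e (w y) n) ∂gnomonicMeasure e,
    fun x y => ∫ n, outVal (answer x n) * truncate c (gnomonic e (w y) n) ∂gnomonicMeasure e,
    ?_, fun y => hf.mul_integral_truncate hfe (w y) c, fun x y => ?_⟩
  · simp only [← hmean]
    exact localFree_momentBehaviour _ hanswer
      (fun y => (continuous_truncate c).measurable.comp (hf.measurable (w y)))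
      fun y n => abs_truncate_le_one hc _
  · exact hf.abs_inner_sub_mul_integral_truncate_le hfe hc (hsign x)
      (fun n => (abs_outVal _).le) (fun n => outVal_decide_nonneg_mul _) (hu x) (w y)

/-! ### The local fraction -/

/-- The weights with which a local-free behaviour can occur in a decomposition of `P`. -/
def localWeights (P : Bool → Bool → Fin M → Fin N → ℝ) : Set ℝ :=
  {p | p ∈ Set.Icc 0 1 ∧ ∃ PL Q : Bool → Bool → Fin M → Fin N → ℝ,
    IsBehaviour PL ∧ LocalFree PL ∧ IsBehaviour Q ∧
    ∀ a b x y, P a b x y = p * PL a b x y + (1 - p) * Q a b x y}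

/-- The local fraction of `P`: the largest weight of a local-free behaviour in `P`. -/
def localFraction (P : Bool → Bool → Fin M → Fin N → ℝ) : ℝ := sSup (localWeights P)

theorem le_localFraction {p : ℝ} (hp : p ∈ localWeights P) : p ≤ localFraction P :=
  le_csSup ⟨1, fun _ h => h.1.2⟩ hp

theorem localFraction_le_one : localFraction P ≤ 1 :=
  Real.sSup_le (fun _ h => h.1.2) zero_le_one

theorem exists_mul_le_of_mem_localWeights {p : ℝ} (hp : p ∈ localWeights P) :
    ∃ PL, LocalFree PL ∧ ∀ a b x y, p * PL a b x y ≤ P a b x y := by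
  obtain ⟨⟨_, hp1⟩, PL, Q, _, hPL, hQ, hP⟩ := hp
  refine ⟨PL, hPL, fun a b x y => ?_⟩
  rw [hP]
  exact le_add_of_nonneg_right (mul_nonneg (sub_nonneg.2 hp1) (hQ.1 a b x y))

theorem mem_localWeights_of_mul_le {PL : Bool → Bool → Fin M → Fin N → ℝ} {p : ℝ}
    (hp : p ∈ Set.Icc 0 1) (hP : ∀ x y, ∑ a, ∑ b, P a b x y = 1) (hPL : LocalFree PL)
    (hle : ∀ a b x y, p * PL a b x y ≤ P a b x y) : p ∈ localWeights P := by
  have hPL' := hPL.isBehaviour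
  have hsum (x y) : ∑ a, ∑ b, (P a b x y - p * PL a b x y) = 1 - p := by
    simp only [sum_sub_distrib, ← mul_sum, hP, hPL'.2, mul_one]
  rcases hp.2.eq_or_lt with rfl | hp1
  · refine ⟨hp, PL, PL, hPL', hPL, hPL', fun a b x y => ?_⟩
    have hnonneg (a b) : 0 ≤ P a b x y - 1 * PL a b x y := sub_nonneg.2 (hle a b x y)
    have hzero := hsum x y
    rw [sub_self, sum_eq_zero_iff_of_nonneg fun a _ => sum_nonneg fun b _ => hnonneg a b] at hzero
    have hab := (sum_eq_zero_iff_of_nonneg fun b _ => hnonneg a b).1 (hzero a (mem_univ a)) b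
      (mem_univ b)
    linarith
  · have hp1' : 0 < 1 - p := sub_pos.2 hp1
    refine ⟨hp, PL, fun a b x y => (P a b x y - p * PL a b x y) / (1 - p), hPL', hPL,
      ⟨fun a b x y => div_nonneg (sub_nonneg.2 (hle a b x y)) hp1'.le, fun x y => ?_⟩,
      fun a b x y => ?_⟩
    · simp only [← sum_div, hsum, div_self hp1'.ne']
    · rw [mul_div_cancel₀ _ hp1'.ne']
      ring

end Behaviours

/-! ### The lower bound -/

/-- The correlation matrix of the quantum state applied to `v`: the correlator of the measurements
along `u` and `v` is the inner product of `u` with this vector. -/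
def correlationVector (θ : ℝ) (v : EuclideanSpace ℝ (Fin 3)) : EuclideanSpace ℝ (Fin 3) :=
  !₂[Real.sin θ * v 0, -(Real.sin θ * v 1), v 2]

theorem inner_correlationVector (θ : ℝ) (u v : EuclideanSpace ℝ (Fin 3)) :
    ⟪u, correlationVector θ v⟫_ℝ = u 2 * v 2 + Real.sin θ * (u 0 * v 0 - u 1 * v 1) := by
  simp only [correlationVector, PiLp.inner_apply, RCLike.inner_apply, conj_trivial,
    Fin.sum_univ_three, Matrix.cons_val]
  ring

theorem norm_correlationVector_add_smul_single {θ t : ℝ} (ht : t ^ 2 = Real.cos θ ^ 2)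
    {v : EuclideanSpace ℝ (Fin 3)} (hv : ‖v‖ = 1) :
    ‖correlationVector θ v + t • EuclideanSpace.single 2 1‖ = 1 + t * v 2 := by
  have ht_abs : |t| ≤ 1 := (sq_eq_sq_iff_abs_eq_abs _ _).1 ht ▸ Real.abs_cos_le_one θ
  have hv_abs : |v 2| ≤ 1 := hv ▸ PiLp.norm_apply_le v 2
  have htv_abs : |t * v 2| ≤ 1 := by
    rw [abs_mul]
    exact mul_le_one₀ ht_abs (abs_nonneg _) hv_abs
  have hv_sq : v 0 ^ 2 + v 1 ^ 2 + v 2 ^ 2 = 1 := by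
    rw [← Fin.sum_univ_three fun i => v i ^ 2, ← EuclideanSpace.real_norm_sq_eq, hv, one_pow]
  rw [← sq_eq_sq₀ (norm_nonneg _) (by linarith [neg_le_of_abs_le htv_abs]),
    EuclideanSpace.real_norm_sq_eq, Fin.sum_univ_three]
  simp only [correlationVector, PiLp.add_apply, PiLp.smul_apply, PiLp.single_apply,
    Matrix.cons_val, Fin.reduceEq, if_true, if_false, smul_eq_mul, mul_one, mul_zero, add_zero]
  linear_combination Real.sin θ ^ 2 * hv_sq + (1 - v 2 ^ 2) * (ht + Real.sin_sq_add_cos_sq θ)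

theorem cos_mem_localWeights {M N : ℕ} {θ : ℝ} (hθ : 0 ≤ Real.cos θ)
    {u : Fin M → EuclideanSpace ℝ (Fin 3)} {v : Fin N → EuclideanSpace ℝ (Fin 3)}
    (hu : ∀ x, ‖u x‖ = 1) (hv : ∀ y, ‖v y‖ = 1) : Real.cos θ ∈ localWeights (qBehaviour θ u v) := by
  have hnorm_add (y) := norm_correlationVector_add_smul_single (θ := θ) rfl (hv y)
  have hnorm_sub (y) := norm_correlationVector_add_smul_single (neg_sq (Real.cos θ)) (hv y)
  simp only [neg_smul, ← sub_eq_add_neg] at hnorm_sub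
  obtain ⟨β, C, hlocal, hβ, hC⟩ := exists_localFree_abs_inner_sub_le
    (e := EuclideanSpace.single 2 1) (by simp) hθ hu fun y => correlationVector θ (v y)
  have hβ_eq (y) : Real.cos θ * β y = Real.cos θ * v y 2 := by
    rw [hβ, hnorm_add, hnorm_sub]
    ring
  have hC_le (x y) :
      |⟪u x, correlationVector θ (v y)⟫_ℝ - Real.cos θ * C x y| ≤ 1 - Real.cos θ := by
    refine (hC x y).trans_eq ?_
    rw [hnorm_add, hnorm_sub]
    ring
  rw [qBehaviour_eq_momentBehaviour]
  refine mem_localWeights_of_mul_le ⟨hθ, Real.cos_le_one θ⟩ (sum_momentBehaviour _ _ _) hlocal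
    fun a b x y => (mul_momentBehaviour_le hC_le a b x y).trans_eq ?_
  simp only [hβ_eq, inner_correlationVector, EuclideanSpace.inner_single_right, conj_trivial,
    one_mul]

/-! ### Chained Bell inequalities -/

section Chain

variable {M N : ℕ} {P : Bool → Bool → Fin M → Fin N → ℝ}

/-- The probability that independent binary outcomes, equal to `true` with probabilities `α` and
`β`, differ. -/
def mismatch (α β : ℝ) : ℝ := α * (1 - β) + (1 - α) * β

theorem mismatch_triangle {α β γ : ℝ} (hα : α ∈ Set.Icc 0 1) (hβ : β ∈ Set.Icc 0 1)
    (hγ : γ ∈ Set.Icc 0 1) : mismatch α γ ≤ mismatch α β + mismatch β γ := by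
  have h₁ : 0 ≤ β * ((1 - α) * (1 - γ)) :=
    mul_nonneg hβ.1 (mul_nonneg (sub_nonneg.2 hα.2) (sub_nonneg.2 hγ.2))
  have h₂ : 0 ≤ (1 - β) * (α * γ) := mul_nonneg (sub_nonneg.2 hβ.2) (mul_nonneg hα.1 hγ.1)
  rw [mismatch, mismatch, mismatch]
  linarith

theorem mismatch_comm (α β : ℝ) : mismatch α β = mismatch β α := by
  rw [mismatch, mismatch]
  ring

/-- The probability that the outcomes of the measurements `x` and `y` differ. -/
def diffProb (P : Bool → Bool → Fin M → Fin N → ℝ) (x : Fin M) (y : Fin N) : ℝ :=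
  P true false x y + P false true x y

theorem diffProb_momentBehaviour (α : Fin M → ℝ) (β : Fin N → ℝ) (E : Fin M → Fin N → ℝ) (x : Fin M)
    (y : Fin N) : diffProb (momentBehaviour α β E) x y = (1 - E x y) / 2 := by
  simp only [diffProb, momentBehaviour, outVal, if_true, Bool.false_eq_true, if_false]
  ring

theorem LocalFree.exists_diffProb_eq_sum (h : LocalFree P) :
    ∃ (n : ℕ) (q : Fin n → ℝ) (α : Fin M → Fin n → ℝ) (β : Fin N → Fin n → ℝ),
      (∀ l, 0 ≤ q l) ∧ (∀ x l, α x l ∈ Set.Icc 0 1) ∧ (∀ y l, β y l ∈ Set.Icc 0 1) ∧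
      ∀ x y, diffProb P x y = ∑ l, q l * mismatch (α x l) (β y l) := by
  obtain ⟨n, q, A, B, hq, -, hA, hA_sum, hB, hB_sum, hP⟩ := h
  simp only [Fintype.sum_bool] at hA_sum hB_sum
  refine ⟨n, q, A true, B true, hq, fun x l => ⟨hA true x l, ?_⟩, fun y l => ⟨hB true y l, ?_⟩,
    fun x y => ?_⟩
  · linarith [hA false x l, hA_sum x l]
  · linarith [hB false y l, hB_sum y l]
  · simp only [diffProb, hP, ← sum_add_distrib, mismatch, ← eq_sub_of_add_eq' (hA_sum x _),
      ← eq_sub_of_add_eq' (hB_sum y _)]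
    exact sum_congr rfl fun l _ => by ring

theorem LocalFree.diffProb_le (h : LocalFree P) (x x' : Fin M) (y y' : Fin N) :
    diffProb P x y' ≤ diffProb P x y + diffProb P x' y + diffProb P x' y' := by
  obtain ⟨n, q, α, β, hq, hα, hβ, hP⟩ := h.exists_diffProb_eq_sum
  simp only [hP, ← sum_add_distrib, ← mul_add]
  refine sum_le_sum fun l _ => mul_le_mul_of_nonneg_left ?_ (hq l)
  have hxyy' := mismatch_triangle (hα x l) (hβ y l) (hβ y' l)
  have hyx'y' := mismatch_triangle (hβ y l) (hα x' l) (hβ y' l)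
  rw [mismatch_comm (β y l) (α x' l)] at hyx'y'
  linarith

theorem LocalFree.diffProb_zero_last_le (h : LocalFree P) {m : ℕ} (x : Fin (m + 1) → Fin M)
    (y : Fin (m + 1) → Fin N) :
    diffProb P (x 0) (y (Fin.last m)) ≤
      ∑ i, diffProb P (x i) (y i) + ∑ i : Fin m, diffProb P (x i.succ) (y i.castSucc) := by
  induction m with
  | zero => simp
  | succ m ih =>
    have hprefix := ih (x ∘ Fin.castSucc) (y ∘ Fin.castSucc)
    have hstep := h.diffProb_le (x 0) (x (Fin.last (m + 1))) (y (Fin.last m).castSucc)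
      (y (Fin.last (m + 1)))
    simp only [Function.comp_apply, Fin.castSucc_zero] at hprefix
    rw [Fin.sum_univ_castSucc fun i => diffProb P (x i) (y i),
      Fin.sum_univ_castSucc fun i : Fin (m + 1) => diffProb P (x i.succ) (y i.castSucc),
      Fin.succ_last]
    simp only [Fin.succ_castSucc] at hprefix ⊢
    linarith

theorem le_chain_of_mem_localWeights {p : ℝ} (hp : p ∈ localWeights P)
    (hP : ∀ x y, ∑ a, ∑ b, P a b x y = 1) {m : ℕ} (x : Fin (m + 1) → Fin M)
    (y : Fin (m + 1) → Fin N) :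
    p ≤ ∑ i, diffProb P (x i) (y i) + ∑ i : Fin m, diffProb P (x i.succ) (y i.castSucc) +
      (1 - diffProb P (x 0) (y (Fin.last m))) := by
  obtain ⟨PL, hPL, hle⟩ := exists_mul_le_of_mem_localWeights hp
  have hdiff (x y) : p * diffProb PL x y ≤ diffProb P x y := by
    rw [diffProb, mul_add]
    exact add_le_add (hle ..) (hle ..)
  have hsame (x y) : p * (1 - diffProb PL x y) ≤ 1 - diffProb P x y := by
    have hP_sum := hP x y
    have hPL_sum := hPL.isBehaviour.2 x y
    simp only [Fintype.sum_bool] at hP_sum hPL_sum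
    calc p * (1 - diffProb PL x y) = p * PL true true x y + p * PL false false x y := by
          rw [← hPL_sum, diffProb]
          ring
      _ ≤ P true true x y + P false false x y := add_le_add (hle ..) (hle ..)
      _ = 1 - diffProb P x y := by
          rw [← hP_sum, diffProb]
          ring
  have hchain := mul_le_mul_of_nonneg_left (hPL.diffProb_zero_last_le x y) hp.1.1
  rw [mul_add, mul_sum, mul_sum] at hchain
  have hdiag := sum_le_sum fun i (_ : i ∈ univ) => hdiff (x i) (y i)
  have hoffdiag := sum_le_sum fun (i : Fin m) (_ : i ∈ univ) => hdiff (x i.succ) (y i.castSucc)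
  linarith [hsame (x 0) (y (Fin.last m))]

end Chain

/-! ### The upper bound -/

/-- The direction with coordinate `x` on the meridian in the plane of the first and third axes. In
this parametrization the chained Bell inequality with equally spaced directions telescopes. -/
def meridian (x : ℝ) : EuclideanSpace ℝ (Fin 3) := !₂[(Real.cosh x)⁻¹, 0, Real.tanh x]

theorem norm_meridian (x : ℝ) : ‖meridian x‖ = 1 := by
  have := (Real.cosh_pos x).ne'
  rw [← sq_eq_sq₀ (norm_nonneg _) zero_le_one, EuclideanSpace.real_norm_sq_eq,
    Fin.sum_univ_three]
  simp only [meridian, Matrix.cons_val, Real.tanh_eq_sinh_div_cosh]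
  field_simp
  linear_combination -Real.cosh_sq x

theorem diffProb_qBehaviour_meridian {M N : ℕ} (θ : ℝ) (s : Fin M → ℝ) (t : Fin N → ℝ) (i : Fin M)
    (j : Fin N) :
    diffProb (qBehaviour θ (fun i => meridian (s i)) fun j => meridian (t j)) i j =
      (Real.cosh (s i - t j) - Real.sin θ) / (2 * (Real.cosh (s i) * Real.cosh (t j))) := by
  have hs := (Real.cosh_pos (s i)).ne'
  have ht := (Real.cosh_pos (t j)).ne'
  rw [qBehaviour_eq_momentBehaviour, diffProb_momentBehaviour, Real.cosh_sub]
  simp only [meridian, Matrix.cons_val, Real.tanh_eq_sinh_div_cosh]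
  field_simp
  ring

theorem tanh_sub_tanh (x y : ℝ) :
    Real.tanh x - Real.tanh y = Real.sinh (x - y) / (Real.cosh x * Real.cosh y) := by
  have hx := (Real.cosh_pos x).ne'
  have hy := (Real.cosh_pos y).ne'
  rw [Real.sinh_sub, Real.tanh_eq_sinh_div_cosh, Real.tanh_eq_sinh_div_cosh]
  field_simp

theorem sum_even_add_sum_odd {A : Type*} [AddCommMonoid A] (g : ℕ → A) (m : ℕ) :
    ∑ i : Fin (m + 1), g (2 * i) + ∑ i : Fin m, g (2 * i + 1) = ∑ k ∈ range (2 * m + 1), g k := by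
  simp only [Fin.sum_univ_eq_sum_range fun i => g (2 * i),
    Fin.sum_univ_eq_sum_range fun i => g (2 * i + 1)]
  induction m with
  | zero => simp
  | succ m ih =>
    rw [sum_range_succ, sum_range_succ (fun i => g (2 * i + 1)), add_add_add_comm, ih,
      mul_add_one, sum_range_succ _ (2 * m + 2), sum_range_succ _ (2 * m + 1)]
    abel

/-- The `k`-th of `2 * m + 2` points at distance `δ`, placed symmetrically about the origin. -/
def chainPoint (δ : ℝ) (m k : ℕ) : ℝ := (k - (m + 1 / 2)) * δ

/-- The quantum behaviour for measurements along a chain of directions on the meridian, which belong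
alternately to the first and to the second party. -/
def meridianChain (θ δ : ℝ) (m : ℕ) : Bool → Bool → Fin (m + 1) → Fin (m + 1) → ℝ :=
  qBehaviour θ (fun i => meridian (chainPoint δ m (2 * i)))
    fun j => meridian (chainPoint δ m (2 * j + 1))

theorem sum_diffProb_meridianChain (θ : ℝ) {δ : ℝ} (hδ : δ ≠ 0) (m : ℕ) :
    ∑ i, diffProb (meridianChain θ δ m) i i +
        ∑ i : Fin m, diffProb (meridianChain θ δ m) i.succ i.castSucc =
      (Real.cosh δ - Real.sin θ) / Real.sinh δ * Real.tanh ((m + 1 / 2) * δ) := by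
  set x := chainPoint δ m with hx
  let cost (k : ℕ) : ℝ :=
    (Real.cosh δ - Real.sin θ) / (2 * Real.sinh δ) * (Real.tanh (x (k + 1)) - Real.tanh (x k))
  have hstep (k : ℕ) : x (k + 1) - x k = δ := by
    simp only [hx, chainPoint, Nat.cast_add, Nat.cast_one]
    ring
  have hcost (k : ℕ) : (Real.cosh δ - Real.sin θ) /
      (2 * (Real.cosh (x (k + 1)) * Real.cosh (x k))) = cost k := by
    have hsinh : Real.sinh δ ≠ 0 := Real.sinh_ne_zero.2 hδ
    simp only [cost, tanh_sub_tanh, hstep]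
    field_simp
  have hdiag (i : Fin (m + 1)) : diffProb (meridianChain θ δ m) i i = cost (2 * i) := by
    rw [meridianChain, diffProb_qBehaviour_meridian, ← hcost, ← Real.cosh_neg, neg_sub, hstep,
      mul_comm (Real.cosh _)]
  have hoffdiag (i : Fin m) :
      diffProb (meridianChain θ δ m) i.succ i.castSucc = cost (2 * i + 1) := by
    rw [meridianChain, diffProb_qBehaviour_meridian, ← hcost, Fin.val_succ, Fin.val_castSucc,
      mul_add_one, hstep]
  have hfirst : x 0 = -((m + 1 / 2) * δ) := by
    simp only [hx, chainPoint, Nat.cast_zero]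
    ring
  have hlast : x (2 * m + 1) = (m + 1 / 2) * δ := by
    simp only [hx, chainPoint, Nat.cast_add, Nat.cast_mul, Nat.cast_ofNat, Nat.cast_one]
    ring
  simp only [hdiag, hoffdiag]
  rw [sum_even_add_sum_odd cost, ← mul_sum, sum_range_sub fun k => Real.tanh (x k), hfirst,
    hlast, Real.tanh_neg]
  ring

theorem one_sub_diffProb_meridianChain (θ δ : ℝ) (m : ℕ) :
    1 - diffProb (meridianChain θ δ m) 0 (Fin.last m) =
      (1 + Real.sin θ) / (2 * Real.cosh ((m + 1 / 2) * δ) ^ 2) := by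
  set R := (m + 1 / 2) * δ with hR
  have hfirst : chainPoint δ m (2 * (0 : Fin (m + 1))) = -R := by
    simp only [chainPoint, hR, Fin.val_zero, mul_zero, Nat.cast_zero]
    ring
  have hlast : chainPoint δ m (2 * Fin.last m + 1) = R := by
    simp only [chainPoint, hR, Fin.val_last, Nat.cast_add, Nat.cast_mul, Nat.cast_ofNat,
      Nat.cast_one]
    ring
  rw [meridianChain, diffProb_qBehaviour_meridian, hfirst, hlast, Real.cosh_sub, Real.cosh_neg,
    Real.sinh_neg]
  have hcosh := (Real.cosh_pos R).ne'
  field_simp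
  linear_combination Real.cosh_sq R

theorem localFraction_meridianChain_le {θ δ : ℝ} (hδ : 0 < δ) (hθ : 1 ≤ Real.sin θ * Real.cosh δ)
    (m : ℕ) :
    localFraction (meridianChain θ δ m) ≤
      Real.tanh δ + (Real.cosh ((m + 1 / 2) * δ) ^ 2)⁻¹ := by
  set R := (m + 1 / 2) * δ
  have hcosh_pos : 0 < Real.cosh δ := Real.cosh_pos δ
  have hsinh_pos : 0 < Real.sinh δ := Real.sinh_pos_iff.2 hδ
  have hslope : (Real.cosh δ - Real.sin θ) / Real.sinh δ ≤ Real.tanh δ := by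
    rw [Real.tanh_eq_sinh_div_cosh, div_le_div_iff₀ hsinh_pos hcosh_pos, sub_mul, ← sq, ← sq,
      Real.cosh_sq]
    linarith
  have hslope_nonneg : 0 ≤ (Real.cosh δ - Real.sin θ) / Real.sinh δ :=
    div_nonneg (sub_nonneg.2 ((Real.sin_le_one θ).trans (Real.one_le_cosh δ))) hsinh_pos.le
  have hend : (1 + Real.sin θ) / (2 * Real.cosh R ^ 2) ≤ (Real.cosh R ^ 2)⁻¹ := by
    rw [div_le_iff₀ (by positivity)]
    field_simp
    linarith [Real.sin_le_one θ]
  refine Real.sSup_le (fun p hp => ?_) (add_nonneg (hslope_nonneg.trans hslope) (by positivity))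
  calc p ≤ (Real.cosh δ - Real.sin θ) / Real.sinh δ * Real.tanh R +
        (1 + Real.sin θ) / (2 * Real.cosh R ^ 2) := by
        rw [← sum_diffProb_meridianChain θ hδ.ne', ← one_sub_diffProb_meridianChain]
        refine le_chain_of_mem_localWeights hp (fun x y => ?_) id id
        rw [meridianChain, qBehaviour_eq_momentBehaviour, sum_momentBehaviour]
    _ ≤ Real.tanh δ + (Real.cosh R ^ 2)⁻¹ :=
        add_le_add ((mul_le_of_le_one_right hslope_nonneg (Real.tanh_lt_one R).le).trans hslope)
          hend

theorem one_le_mul_cosh_artanh {s x : ℝ} (hs : 0 ≤ s) (hx : x ∈ Set.Ioo (-1) 1)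
    (hsx : 1 ≤ s ^ 2 + x ^ 2) : 1 ≤ s * Real.cosh (Real.artanh x) := by
  have hx_sq : x ^ 2 < 1 := (sq_lt_one_iff_abs_lt_one x).2 (abs_lt.2 hx)
  rw [Real.cosh_artanh hx, mul_one_div, one_le_div (Real.sqrt_pos.2 (sub_pos.2 hx_sq)),
    Real.sqrt_le_left hs]
  linarith

theorem tendsto_cosh_atTop : Filter.Tendsto Real.cosh Filter.atTop Filter.atTop := by
  refine Filter.tendsto_atTop_mono' _ ?_ Filter.tendsto_id
  filter_upwards [Filter.eventually_ge_atTop 0] with x hx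
  exact (Real.self_le_sinh_iff.2 hx).trans (Real.sinh_lt_cosh x).le

theorem exists_localFraction_meridianChain_lt {θ w : ℝ} (hθ : θ ∈ Set.Icc 0 (Real.pi / 2))
    (hw : Real.cos θ < w) : ∃ (δ : ℝ) (m : ℕ), localFraction (meridianChain θ δ m) < w := by
  have hcos : 0 ≤ Real.cos θ := Real.cos_nonneg_of_mem_Icc ⟨by linarith [hθ.1, hθ.2], hθ.2⟩
  have hsin : 0 ≤ Real.sin θ := Real.sin_nonneg_of_nonneg_of_le_pi hθ.1 (by linarith [hθ.1, hθ.2])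
  rcases lt_or_ge 1 w with hw1 | hw1
  · exact ⟨0, 0, localFraction_le_one.trans_lt hw1⟩
  obtain ⟨x, hcx, hxw⟩ := exists_between hw
  have hx : x ∈ Set.Ioo 0 1 := ⟨hcos.trans_lt hcx, hxw.trans_le hw1⟩
  have hx' : x ∈ Set.Ioo (-1) 1 := ⟨by linarith [hx.1], hx.2⟩
  set δ := Real.artanh x
  have hδ : 0 < δ := Real.artanh_pos hx
  have hsincosh : 1 ≤ Real.sin θ * Real.cosh δ := by
    refine one_le_mul_cosh_artanh hsin hx' ?_
    rw [← Real.sin_sq_add_cos_sq θ]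
    gcongr
  have hlim : Filter.Tendsto (fun m : ℕ => (Real.cosh ((m + 1 / 2) * δ) ^ 2)⁻¹) Filter.atTop
      (nhds 0) := by
    refine Filter.Tendsto.inv_tendsto_atTop ((Filter.tendsto_pow_atTop two_ne_zero).comp
      (tendsto_cosh_atTop.comp (Filter.Tendsto.atTop_mul_const hδ ?_)))
    exact Filter.tendsto_atTop_add_const_right _ _ tendsto_natCast_atTop_atTop
  obtain ⟨m, hm⟩ := (hlim.eventually_lt_const (sub_pos.2 hxw)).exists
  refine ⟨δ, m, (localFraction_meridianChain_le hδ hsincosh m).trans_lt ?_⟩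
  rw [Real.tanh_artanh hx']
  linarith

theorem qstate_fraction_eq_cos (θ : ℝ) (hθ : θ ∈ Set.Icc (0 : ℝ) (Real.pi / 2)) :
    sInf {m : ℝ | ∃ (M N : ℕ), 0 < M ∧ 0 < N ∧
      ∃ (u : Fin M → EuclideanSpace ℝ (Fin 3)) (v : Fin N → EuclideanSpace ℝ (Fin 3)),
        (∀ x, ‖u x‖ = 1) ∧ (∀ y, ‖v y‖ = 1) ∧
        m = sSup {p : ℝ | p ∈ Set.Icc (0 : ℝ) 1 ∧
          ∃ PL Q : Bool → Bool → Fin M → Fin N → ℝ,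
            IsBehaviour PL ∧ LocalFree PL ∧ IsBehaviour Q ∧
            ∀ a b x y, qBehaviour θ u v a b x y = p * PL a b x y + (1 - p) * Q a b x y}}
      = Real.cos θ := by
  have hcos : 0 ≤ Real.cos θ := Real.cos_nonneg_of_mem_Icc ⟨by linarith [hθ.1, hθ.2], hθ.2⟩
  refine csInf_eq_of_forall_ge_of_forall_gt_exists_lt
    ⟨_, 1, 1, one_pos, one_pos, fun _ => meridian 0, fun _ => meridian 0,
      fun _ => norm_meridian 0, fun _ => norm_meridian 0, rfl⟩ ?_ ?_
  · rintro _ ⟨M, N, _, _, u, v, hu, hv, rfl⟩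
    exact le_localFraction (cos_mem_localWeights hcos hu hv)
  · intro w hw
    obtain ⟨δ, m, hlt⟩ := exists_localFraction_meridianChain_lt hθ hw
    exact ⟨localFraction (meridianChain θ δ m), ⟨m + 1, m + 1, m.succ_pos, m.succ_pos, _, _,
      fun _ => norm_meridian _, fun _ => norm_meridian _, rfl⟩, hlt⟩
end
end

section
/- For every behaviour P with M settings, the supremum of the free weight over all LHV models of P with setting distribution p is the same for every full-support setting distribution p; that is, for any two setting distributions p and p′ with p(x,y) > 0 and p′(x,y) > 0 for all x,y, sup{free weight of N : N an LHV model of P with setting distribution p} = sup{free weight of N : N an LHV model of P with setting distribution p′}. Consequently μ_F(P) equals the supremum of free weights of LHV models of P for any fixed full-support setting distribution. -/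
open scoped BigOperators Classical
open Finset

noncomputable section

/-- A full-support probability distribution on pairs of settings. -/
def IsSettingDist {M : ℕ} (p : Fin M → Fin M → ℝ) : Prop :=
  (∀ x y, 0 < p x y) ∧ ∑ x, ∑ y, p x y = 1

/-- A hidden-variable model of the behaviour `P` with setting distribution `p`,
with finite hidden-variable space `Fin n`. -/
structure HVModel (M : ℕ) (P : Bool → Bool → Fin M → Fin M → ℝ)
    (p : Fin M → Fin M → ℝ) where
  n : ℕ
  q : Fin n → ℝ
  q_nonneg : ∀ l, 0 ≤ q l
  q_sum : ∑ l, q l = 1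
  qc : Fin M → Fin M → Fin n → ℝ
  qc_nonneg : ∀ x y l, 0 ≤ qc x y l
  qc_sum : ∀ x y, ∑ l, qc x y l = 1
  q_marg : ∀ l, q l = ∑ x, ∑ y, qc x y l * p x y
  Pc : Fin n → Bool → Bool → Fin M → Fin M → ℝ
  Pc_nonneg : ∀ l a b x y, 0 ≤ Pc l a b x y
  Pc_sum : ∀ l x y, ∑ a, ∑ b, Pc l a b x y = 1
  reproduce : ∀ a b x y, P a b x y = ∑ l, Pc l a b x y * qc x y l

namespace HVModel

variable {M : ℕ} {P : Bool → Bool → Fin M → Fin M → ℝ} {p : Fin M → Fin M → ℝ}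

/-- A hidden variable is local if the conditional outcome distribution factorises. -/
def IsLocalPoint (N : HVModel M P p) (l : Fin N.n) : Prop :=
  ∃ α β : Bool → Fin M → ℝ,
    (∀ a x, 0 ≤ α a x) ∧ (∀ x, ∑ a, α a x = 1) ∧
    (∀ b y, 0 ≤ β b y) ∧ (∀ y, ∑ b, β b y = 1) ∧
    (∀ a b x y, N.Pc l a b x y = α a x * β b y)

/-- A hidden variable is free if it is independent of the settings. -/
def IsFreePoint (N : HVModel M P p) (l : Fin N.n) : Prop :=
  ∀ x y, N.qc x y l = N.q l

/-- The total weight of the local hidden variables. -/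
def localWeight (N : HVModel M P p) : ℝ :=
  ∑ l, if N.IsLocalPoint l then N.q l else 0

/-- The total weight of the free hidden variables. -/
def freeWeight (N : HVModel M P p) : ℝ :=
  ∑ l, if N.IsFreePoint l then N.q l else 0

/-- An FHV model: every hidden variable is free. -/
def IsFHV (N : HVModel M P p) : Prop := ∀ l, N.IsFreePoint l

/-- An LHV model: every hidden variable is local. -/
def IsLHV (N : HVModel M P p) : Prop := ∀ l, N.IsLocalPoint l

end HVModel

/-- Local weights achievable by FHV models of `P` with setting distribution `p`. -/
def FHVLocalWeights (M : ℕ) (P : Bool → Bool → Fin M → Fin M → ℝ)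
    (p : Fin M → Fin M → ℝ) : Set ℝ :=
  {w | ∃ N : HVModel M P p, N.IsFHV ∧ w = N.localWeight}

/-- Free weights achievable by LHV models of `P` with setting distribution `p`. -/
def LHVFreeWeights (M : ℕ) (P : Bool → Bool → Fin M → Fin M → ℝ)
    (p : Fin M → Fin M → ℝ) : Set ℝ :=
  {w | ∃ N : HVModel M P p, N.IsLHV ∧ w = N.freeWeight}

/-- The measure of locality `μ_L`. -/
def muL (M : ℕ) (P : Bool → Bool → Fin M → Fin M → ℝ) : ℝ :=
  ⨅ sp : {f : Fin M → Fin M → ℝ // IsSettingDist f}, sSup (FHVLocalWeights M P sp.1)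

/-- The measure of free choice `μ_F`. -/
def muF (M : ℕ) (P : Bool → Bool → Fin M → Fin M → ℝ) : ℝ :=
  ⨅ sp : {f : Fin M → Fin M → ℝ // IsSettingDist f}, sSup (LHVFreeWeights M P sp.1)

/-!
The setting distribution `p` enters a model only through the marginal `q`; reproducing `P` and
locality concern the conditionals `q(·|x,y)` and the outcome distributions alone. A point is free
exactly when `q(λ|x,y)` does not depend on `(x,y)`, and its weight is then this constant value,
whatever `p` is. So recomputing `q` for another setting distribution turns an LHV model into an LHV
model of the same free weight, and the *set* of attainable free weights does not depend on `p`.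
-/

lemma sum_mixture {X Y Λ R : Type*} [Fintype X] [Fintype Y] [Fintype Λ] [NonAssocSemiring R]
    {k : X → Y → Λ → R} (hk : ∀ x y, ∑ l, k x y l = 1) (p : X → Y → R) :
    ∑ l, ∑ x, ∑ y, k x y l * p x y = ∑ x, ∑ y, p x y := by
  rw [sum_comm]
  refine sum_congr rfl fun x _ => ?_
  rw [sum_comm]
  exact sum_congr rfl fun y _ => by rw [← sum_mul, hk, one_mul]

namespace IsSettingDist

variable {M : ℕ}

lemma uncurry_mem_stdSimplex {p : Fin M → Fin M → ℝ} (hp : IsSettingDist p) :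
    Function.uncurry p ∈ stdSimplex ℝ (Fin M × Fin M) :=
  ⟨fun s => (hp.1 s.1 s.2).le, (Fintype.sum_prod_type' p).trans hp.2⟩

lemma uniform [NeZero M] : IsSettingDist fun _ _ : Fin M => (M : ℝ)⁻¹ * (M : ℝ)⁻¹ := by
  have hM : (M : ℝ) ≠ 0 := NeZero.ne _
  refine ⟨fun _ _ => by positivity, ?_⟩
  simp only [sum_const, card_univ, Fintype.card_fin, nsmul_eq_mul]
  field_simp

end IsSettingDist

namespace HVModel

variable {M : ℕ} {P : Bool → Bool → Fin M → Fin M → ℝ} {p p' : Fin M → Fin M → ℝ}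

/-- The hidden-variable model determined by its conditional distributions `qc` and `Pc`, with `q`
defined as the marginal. The setting distribution need not have full support; membership of the
uncurried function in the standard simplex says that it is a probability distribution. -/
def ofConditionals (hp : Function.uncurry p ∈ stdSimplex ℝ (Fin M × Fin M)) {n : ℕ}
    (qc : Fin M → Fin M → Fin n → ℝ) (qc_nonneg : ∀ x y l, 0 ≤ qc x y l)
    (qc_sum : ∀ x y, ∑ l, qc x y l = 1) (Pc : Fin n → Bool → Bool → Fin M → Fin M → ℝ)
    (Pc_nonneg : ∀ l a b x y, 0 ≤ Pc l a b x y) (Pc_sum : ∀ l x y, ∑ a, ∑ b, Pc l a b x y = 1)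
    (reproduce : ∀ a b x y, P a b x y = ∑ l, Pc l a b x y * qc x y l) : HVModel M P p where
  n := n
  q l := ∑ x, ∑ y, qc x y l * p x y
  q_nonneg l :=
    sum_nonneg fun x _ => sum_nonneg fun y _ => mul_nonneg (qc_nonneg x y l) (hp.1 (x, y))
  q_sum := (sum_mixture qc_sum p).trans ((Fintype.sum_prod_type' p).symm.trans hp.2)
  qc := qc
  qc_nonneg := qc_nonneg
  qc_sum := qc_sum
  q_marg _ := rfl
  Pc := Pc
  Pc_nonneg := Pc_nonneg
  Pc_sum := Pc_sum
  reproduce := reproduce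

lemma sum_settingDist_eq_one (N : HVModel M P p) : ∑ x, ∑ y, p x y = 1 := by
  rw [← sum_mixture N.qc_sum p, ← N.q_sum]
  exact sum_congr rfl fun l _ => (N.q_marg l).symm

section FreePoints

variable (N : HVModel M P p)

lemma q_eq_of_qc_eq_const {l : Fin N.n} {c : ℝ} (h : ∀ x y, N.qc x y l = c) : N.q l = c := by
  simp only [N.q_marg, h, ← mul_sum, N.sum_settingDist_eq_one, mul_one]

lemma isFreePoint_iff_exists_const {l : Fin N.n} :
    N.IsFreePoint l ↔ ∃ c, ∀ x y, N.qc x y l = c :=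
  ⟨fun h => ⟨N.q l, h⟩, fun ⟨_, h⟩ x y => (h x y).trans (N.q_eq_of_qc_eq_const h).symm⟩

lemma freeWeight_le_one : N.freeWeight ≤ 1 := by
  rw [← N.q_sum]
  refine sum_le_sum fun l _ => ?_
  split_ifs
  exacts [le_rfl, N.q_nonneg l]

end FreePoints

section Reweight

/-- The model with the conditional distributions of `N` and setting distribution `p'`; it has the
same local points and the same free points as `N`. -/
def reweight (N : HVModel M P p) (hp' : Function.uncurry p' ∈ stdSimplex ℝ (Fin M × Fin M)) :
    HVModel M P p' :=
  ofConditionals hp' N.qc N.qc_nonneg N.qc_sum N.Pc N.Pc_nonneg N.Pc_sum N.reproduce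

variable {N : HVModel M P p} {hp' : Function.uncurry p' ∈ stdSimplex ℝ (Fin M × Fin M)}

lemma isFreePoint_reweight_iff {l : Fin N.n} :
    (N.reweight hp').IsFreePoint l ↔ N.IsFreePoint l :=
  (N.reweight hp').isFreePoint_iff_exists_const.trans N.isFreePoint_iff_exists_const.symm

lemma IsFreePoint.reweight_q {l : Fin N.n} (h : N.IsFreePoint l) :
    (N.reweight hp').q l = N.q l :=
  (N.reweight hp').q_eq_of_qc_eq_const h

lemma freeWeight_reweight : (N.reweight hp').freeWeight = N.freeWeight :=
  sum_congr rfl fun (_ : Fin N.n) _ =>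
    ite_congr (propext isFreePoint_reweight_iff) IsFreePoint.reweight_q fun _ => rfl

end Reweight

/-- The model whose hidden variable is the pair of outcomes itself, so that each hidden variable
determines both outcomes and carries all the dependence on the settings: every behaviour has an LHV
model. Hidden-variable spaces being of the form `Fin n`, the outcome pairs are enumerated. -/
def outcomeModel (hP : IsBehaviour P)
    (hp : Function.uncurry p ∈ stdSimplex ℝ (Fin M × Fin M)) : HVModel M P p :=
  let e := (Fintype.equivFin (Bool × Bool)).symm
  ofConditionals hp
    (qc := fun x y l => P (e l).1 (e l).2 x y)
    (qc_nonneg := fun x y l => hP.1 (e l).1 (e l).2 x y)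
    (qc_sum := fun x y => by
      rw [e.sum_comp fun o => P o.1 o.2 x y, Fintype.sum_prod_type, hP.2])
    (Pc := fun l a b _ _ => (Pi.single (e l) 1 : Bool × Bool → ℝ) (a, b))
    (Pc_nonneg := fun l a b _ _ => (single_mem_stdSimplex ℝ (e l)).1 (a, b))
    (Pc_sum := fun l _ _ =>
      (Fintype.sum_prod_type _).symm.trans (single_mem_stdSimplex ℝ (e l)).2)
    (reproduce := fun a b x y => by
      rw [e.sum_comp fun o => (Pi.single o 1 : Bool × Bool → ℝ) (a, b) * P o.1 o.2 x y]
      simp [Pi.single_apply])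

lemma isLHV_outcomeModel (hP : IsBehaviour P)
    (hp : Function.uncurry p ∈ stdSimplex ℝ (Fin M × Fin M)) : (outcomeModel hP hp).IsLHV := by
  intro l
  let o := (Fintype.equivFin (Bool × Bool)).symm l
  have point_mass (c : Bool) := single_mem_stdSimplex ℝ c
  refine ⟨fun a _ => (Pi.single o.1 1 : Bool → ℝ) a, fun b _ => (Pi.single o.2 1 : Bool → ℝ) b,
    fun a _ => (point_mass o.1).1 a, fun _ => (point_mass o.1).2,
    fun b _ => (point_mass o.2).1 b, fun _ => (point_mass o.2).2, fun a b _ _ => ?_⟩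
  change (Pi.single o 1 : Bool × Bool → ℝ) (a, b) = _
  simp only [Pi.single_apply, Prod.ext_iff, ite_and, ite_mul, one_mul, zero_mul]

end HVModel

section FreeWeights

variable {M : ℕ} {P : Bool → Bool → Fin M → Fin M → ℝ} {p p' : Fin M → Fin M → ℝ}

lemma LHVFreeWeights_subset (hp' : Function.uncurry p' ∈ stdSimplex ℝ (Fin M × Fin M)) :
    LHVFreeWeights M P p ⊆ LHVFreeWeights M P p' := by
  rintro _ ⟨N, hN, rfl⟩
  exact ⟨N.reweight hp', hN, HVModel.freeWeight_reweight.symm⟩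

lemma LHVFreeWeights_eq (hp : Function.uncurry p ∈ stdSimplex ℝ (Fin M × Fin M))
    (hp' : Function.uncurry p' ∈ stdSimplex ℝ (Fin M × Fin M)) :
    LHVFreeWeights M P p = LHVFreeWeights M P p' :=
  (LHVFreeWeights_subset hp').antisymm (LHVFreeWeights_subset hp)

lemma LHVFreeWeights_nonempty (hP : IsBehaviour P)
    (hp : Function.uncurry p ∈ stdSimplex ℝ (Fin M × Fin M)) : (LHVFreeWeights M P p).Nonempty :=
  ⟨_, HVModel.outcomeModel hP hp, HVModel.isLHV_outcomeModel hP hp, rfl⟩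

lemma bddAbove_LHVFreeWeights : BddAbove (LHVFreeWeights M P p) :=
  ⟨1, by rintro _ ⟨N, -, rfl⟩; exact N.freeWeight_le_one⟩

lemma muF_eq_sSup (hp : Function.uncurry p ∈ stdSimplex ℝ (Fin M × Fin M)) :
    muF M P = sSup (LHVFreeWeights M P p) := by
  have : NeZero M := ⟨by rintro rfl; simpa using hp.2⟩
  have : Nonempty {f : Fin M → Fin M → ℝ // IsSettingDist f} := ⟨⟨_, IsSettingDist.uniform⟩⟩
  calc muF M P = ⨅ _ : {f : Fin M → Fin M → ℝ // IsSettingDist f}, sSup (LHVFreeWeights M P p) :=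
        iInf_congr fun s => congrArg sSup (LHVFreeWeights_eq s.2.uncurry_mem_stdSimplex hp)
    _ = sSup (LHVFreeWeights M P p) := ciInf_const

end FreeWeights

theorem sup_LHV_freeWeight_setting_independent_general {M : ℕ}
    {P : Bool → Bool → Fin M → Fin M → ℝ} (hP : IsBehaviour P) {p : Fin M → Fin M → ℝ}
    (hp : Function.uncurry p ∈ stdSimplex ℝ (Fin M × Fin M)) :
    IsLUB (LHVFreeWeights M P p) (muF M P) :=
  muF_eq_sSup hp ▸ isLUB_csSup (LHVFreeWeights_nonempty hP hp) bddAbove_LHVFreeWeights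

theorem sup_LHV_freeWeight_setting_independent (M : ℕ)
    (P : Bool → Bool → Fin M → Fin M → ℝ) (hP : IsBehaviour P) :
    (∀ p p' : Fin M → Fin M → ℝ, IsSettingDist p → IsSettingDist p' →
      sSup (LHVFreeWeights M P p) = sSup (LHVFreeWeights M P p')) ∧
    (∀ p : Fin M → Fin M → ℝ, IsSettingDist p →
      muF M P = sSup (LHVFreeWeights M P p)) := by
  have key (p : Fin M → Fin M → ℝ) (hp : IsSettingDist p) :
      muF M P = sSup (LHVFreeWeights M P p) :=
    have h := sup_LHV_freeWeight_setting_independent_general hP hp.uncurry_mem_stdSimplex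
    (h.csSup_eq h.nonempty).symm
  exact ⟨fun p p' hp hp' => (key p hp).symm.trans (key p' hp'), key⟩
end
end

section
/- Let P be a behaviour with M settings that decomposes pointwise as P = p·P₁ + (1−p)·P₂ with p ∈ [0,1], where P₁ is a behaviour admitting an LHV+FHV model and P₂ is a behaviour admitting an FHV model with respect to a full-support setting distribution p_s. Then P admits an FHV model with setting distribution p_s whose local weight is at least p. -/
/-!
Models of two behaviours combine into a model of their convex combination on the disjoint union of
the hidden-variable spaces. Each point keeps its responses, and hence its locality; its weight and
its conditional weights are all rescaled by the same factor, so free points stay free. Thus local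
weights combine linearly. A local-free behaviour has a free model of local weight `1`, which
accounts for the weight `p`.
-/

open scoped BigOperators Classical
open Finset

noncomputable section

namespace HVModel

variable {M : ℕ} {P P₁ P₂ : Bool → Bool → Fin M → Fin M → ℝ} {p : Fin M → Fin M → ℝ} {s t : ℝ}

theorem localWeight_nonneg (N : HVModel M P p) : 0 ≤ N.localWeight :=
  sum_nonneg fun l _ => ite_nonneg (N.q_nonneg l) le_rfl

theorem IsLHV.localWeight_eq_one {N : HVModel M P p} (hN : N.IsLHV) : N.localWeight = 1 :=
  (sum_congr rfl fun l _ => if_pos (hN l)).trans N.q_sum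

/-- The convex combination of two hidden-variable models: with probability `s` the hidden variable
is drawn from `N₁`, with probability `t` from `N₂`. The hidden-variable space is the disjoint union
of the two, encoded as `Fin (N₁.n + N₂.n)` with the points of `N₁` first. -/
def mix (N₁ : HVModel M P₁ p) (N₂ : HVModel M P₂ p) (hs : 0 ≤ s) (ht : 0 ≤ t) (hst : s + t = 1) :
    HVModel M (s • P₁ + t • P₂) p where
  n := N₁.n + N₂.n
  q := Fin.append (s • N₁.q) (t • N₂.q)
  q_nonneg := by
    simp [Fin.forall_fin_add, mul_nonneg, hs, ht, N₁.q_nonneg, N₂.q_nonneg]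
  q_sum := by
    simp [Fin.sum_univ_add, ← mul_sum, N₁.q_sum, N₂.q_sum, hst]
  qc x y := Fin.append (s • N₁.qc x y) (t • N₂.qc x y)
  qc_nonneg := by
    simp [Fin.forall_fin_add, mul_nonneg, hs, ht, N₁.qc_nonneg, N₂.qc_nonneg]
  qc_sum := by
    simp [Fin.sum_univ_add, ← mul_sum, N₁.qc_sum, N₂.qc_sum, hst]
  q_marg := by
    simp [Fin.forall_fin_add, N₁.q_marg, N₂.q_marg, mul_sum, mul_assoc]
  Pc := Fin.append N₁.Pc N₂.Pc
  Pc_nonneg := by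
    simpa [Fin.forall_fin_add] using And.intro N₁.Pc_nonneg N₂.Pc_nonneg
  Pc_sum := by
    simpa [Fin.forall_fin_add] using And.intro N₁.Pc_sum N₂.Pc_sum
  reproduce a b x y := by
    simp [Fin.sum_univ_add, N₁.reproduce, N₂.reproduce, mul_sum, mul_left_comm]

section Mix

variable (N₁ : HVModel M P₁ p) (N₂ : HVModel M P₂ p) (hs : 0 ≤ s) (ht : 0 ≤ t) (hst : s + t = 1)

theorem isLocalPoint_mix_castAdd (i : Fin N₁.n) :
    (N₁.mix N₂ hs ht hst).IsLocalPoint (Fin.castAdd N₂.n i) ↔ N₁.IsLocalPoint i := by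
  simp only [IsLocalPoint, mix, Fin.append_left]

theorem isLocalPoint_mix_natAdd (j : Fin N₂.n) :
    (N₁.mix N₂ hs ht hst).IsLocalPoint (Fin.natAdd N₁.n j) ↔ N₂.IsLocalPoint j := by
  simp only [IsLocalPoint, mix, Fin.append_right]

theorem localWeight_mix :
    (N₁.mix N₂ hs ht hst).localWeight = s * N₁.localWeight + t * N₂.localWeight := by
  let N := N₁.mix N₂ hs ht hst
  have q_left (i : Fin N₁.n) : N.q (Fin.castAdd N₂.n i) = s * N₁.q i := by
    simp [N, mix]
  have q_right (j : Fin N₂.n) : N.q (Fin.natAdd N₁.n j) = t * N₂.q j := by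
    simp [N, mix]
  refine (Fin.sum_univ_add (a := N₁.n) (b := N₂.n)
    fun l => if N.IsLocalPoint l then N.q l else 0).trans ?_
  simp only [N, isLocalPoint_mix_castAdd, isLocalPoint_mix_natAdd, q_left, q_right,
    localWeight, mul_sum, mul_ite, mul_zero]

variable {N₁ N₂ hs ht hst}

theorem IsFHV.mix (hN₁ : N₁.IsFHV) (hN₂ : N₂.IsFHV) : (N₁.mix N₂ hs ht hst).IsFHV := by
  refine (Fin.forall_fin_add _).2 ⟨fun i x y => ?_, fun j x y => ?_⟩
  · simp [HVModel.mix, hN₁ i x y]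
  · simp [HVModel.mix, hN₂ j x y]

end Mix

end HVModel

section FHVLocalWeights

variable {M : ℕ} {P P₁ P₂ : Bool → Bool → Fin M → Fin M → ℝ} {p : Fin M → Fin M → ℝ}

theorem mul_add_mul_mem_FHVLocalWeights {s t w₁ w₂ : ℝ} (hs : 0 ≤ s) (ht : 0 ≤ t)
    (hst : s + t = 1) (hw₁ : w₁ ∈ FHVLocalWeights M P₁ p) (hw₂ : w₂ ∈ FHVLocalWeights M P₂ p) :
    s * w₁ + t * w₂ ∈ FHVLocalWeights M (s • P₁ + t • P₂) p := by
  obtain ⟨N₁, hN₁, rfl⟩ := hw₁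
  obtain ⟨N₂, hN₂, rfl⟩ := hw₂
  exact ⟨N₁.mix N₂ hs ht hst, hN₁.mix hN₂, (N₁.localWeight_mix N₂ hs ht hst).symm⟩

theorem LocalFree.exists_isFHV_isLHV (hP : LocalFree P) (hp : ∑ x, ∑ y, p x y = 1) :
    ∃ N : HVModel M P p, N.IsFHV ∧ N.IsLHV := by
  obtain ⟨n, q, A, B, hq, hq_sum, hA, hA_sum, hB, hB_sum, hP⟩ := hP
  let N : HVModel M P p :=
    { n := n
      q := q
      q_nonneg := hq
      q_sum := hq_sum
      qc := fun _ _ => q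
      qc_nonneg := fun _ _ => hq
      qc_sum := fun _ _ => hq_sum
      q_marg := fun l => by simp only [← mul_sum, hp, mul_one]
      Pc := fun l a b x y => A a x l * B b y l
      Pc_nonneg := fun l a b x y => mul_nonneg (hA a x l) (hB b y l)
      Pc_sum := fun l x y => by simp only [← mul_sum, hA_sum, hB_sum, mul_one]
      reproduce := fun a b x y => by simp only [hP, mul_assoc, mul_comm (q _)] }
  have hFHV : N.IsFHV := fun _ _ _ => rfl
  have hLHV : N.IsLHV := fun l =>
    ⟨(A · · l), (B · · l), (hA · · l), (hA_sum · l), (hB · · l), (hB_sum · l), fun _ _ _ _ => rfl⟩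
  exact ⟨N, hFHV, hLHV⟩

theorem LocalFree.one_mem_FHVLocalWeights (hP : LocalFree P) (hp : ∑ x, ∑ y, p x y = 1) :
    1 ∈ FHVLocalWeights M P p :=
  let ⟨N, hFHV, hLHV⟩ := hP.exists_isFHV_isLHV hp
  ⟨N, hFHV, hLHV.localWeight_eq_one.symm⟩

end FHVLocalWeights

theorem stitch_FHV_models (M : ℕ) (P P1 P2 : Bool → Bool → Fin M → Fin M → ℝ)
    (hP : IsBehaviour P) (hP1 : IsBehaviour P1) (hP2 : IsBehaviour P2)
    (hLF : LocalFree P1) (p : ℝ) (hp : p ∈ Set.Icc (0 : ℝ) 1)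
    (ps : Fin M → Fin M → ℝ) (hps : IsSettingDist ps)
    (hFHV2 : ∃ N2 : HVModel M P2 ps, N2.IsFHV)
    (hdec : ∀ a b x y, P a b x y = p * P1 a b x y + (1 - p) * P2 a b x y) :
    ∃ N : HVModel M P ps, N.IsFHV ∧ p ≤ N.localWeight := by
  obtain ⟨hp0, hp1⟩ := hp
  obtain ⟨N2, hN2⟩ := hFHV2
  have hq0 : 0 ≤ 1 - p := sub_nonneg.2 hp1
  obtain rfl : P = p • P1 + (1 - p) • P2 := by
    funext a b x y
    exact hdec a b x y
  obtain ⟨N, hN, hweight⟩ := mul_add_mul_mem_FHVLocalWeights hp0 hq0 (add_sub_cancel p 1)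
    (hLF.one_mem_FHVLocalWeights hps.2) ⟨N2, hN2, rfl⟩
  refine ⟨N, hN, ?_⟩
  calc
    p ≤ p * 1 + (1 - p) * N2.localWeight := by
      rw [mul_one]
      exact le_add_of_nonneg_right (mul_nonneg hq0 N2.localWeight_nonneg)
    _ = N.localWeight := hweight
end
end

section
/- (Fine's theorem, sufficiency direction.) Every non-signalling behaviour P with two settings x,y ∈ {0,1} satisfying the four CHSH inequalities |S_i(P)| ≤ 2 for i = 1,…,4 admits an LHV+FHV model. -/
/-!
For a fixed setting and outcome `a` of Alice, the two laws of Bob's outcome, weighted by the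
probability of `a`, can be coupled into a joint law of Bob's answers `(b₀, b₁)` to both settings.
The couplings are parametrised by their mass at `(+, +)`, which ranges over the Fréchet interval.
Adding over `a`, a setting `x` of Alice can produce every value in an interval `I x` for the total
mass at `(+, +)`. Bob's local laws do not depend on `x`, so a common point of the `I x` gives a
joint law of `(b₀, b₁)` independent of `x`, which serves as the hidden variable: Bob reads off his
answer and Alice answers with her conditional law.

Intervals have a common point as soon as they meet pairwise. In terms of correlators `E` and of
Bob's means `B`, the interval `I x` meets `I x'` iff
`max |B₀ + B₁| |E₀ + E₁| + max |B₀ - B₁| |E'₀ - E'₁| ≤ 2` and the same holds with `x` and `x'`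
exchanged. The inequalities between two correlator terms are CHSH, and all others follow from
positivity.
-/

open scoped BigOperators Classical
open Finset

noncomputable section

/-- The correlator `⟨ab⟩_{xy}`. -/
def corr {M N : ℕ} (P : Bool → Bool → Fin M → Fin N → ℝ) (x : Fin M) (y : Fin N) : ℝ :=
  ∑ a, ∑ b, outVal a * outVal b * P a b x y

/-- Non-signalling for a two-setting behaviour. -/
def NonSignalling (P : Bool → Bool → Fin 2 → Fin 2 → ℝ) : Prop :=
  (∀ a x y y', ∑ b, P a b x y = ∑ b, P a b x y') ∧
  (∀ b y x x', ∑ a, P a b x y = ∑ a, P a b x' y)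

def S1 (P : Bool → Bool → Fin 2 → Fin 2 → ℝ) : ℝ :=
  corr P 0 0 + corr P 0 1 + corr P 1 0 - corr P 1 1

def S2 (P : Bool → Bool → Fin 2 → Fin 2 → ℝ) : ℝ :=
  corr P 0 0 + corr P 0 1 - corr P 1 0 + corr P 1 1

def S3 (P : Bool → Bool → Fin 2 → Fin 2 → ℝ) : ℝ :=
  corr P 0 0 - corr P 0 1 + corr P 1 0 + corr P 1 1

def S4 (P : Bool → Bool → Fin 2 → Fin 2 → ℝ) : ℝ :=
  -corr P 0 0 + corr P 0 1 + corr P 1 0 + corr P 1 1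

/-- Maximal absolute value of the four CHSH expressions. -/
def Smax (P : Bool → Bool → Fin 2 → Fin 2 → ℝ) : ℝ :=
  max (max |S1 P| |S2 P|) (max |S3 P| |S4 P|)

section OrderedField

variable {𝕜 ι : Type*} [Field 𝕜] [LinearOrder 𝕜] [IsStrictOrderedRing 𝕜]

lemma abs_add_abs_le {p q c : 𝕜} (hadd : |p + q| ≤ c) (hsub : |p - q| ≤ c) : |p| + |q| ≤ c := by
  obtain ⟨_, _⟩ := abs_le.1 hadd
  obtain ⟨_, _⟩ := abs_le.1 hsub
  rcases abs_choice p with hp | hp <;> rcases abs_choice q with hq | hq <;>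
    rw [hp, hq] <;> linarith

lemma abs_add_add_abs_sub (p q : 𝕜) : |p + q| + |p - q| = 2 * max |p| |q| := by
  have hp : (p + q) + (p - q) = 2 * p := by ring
  have hq : (p + q) - (p - q) = 2 * q := by ring
  rw [mul_max_of_nonneg _ _ zero_le_two, ← abs_two, ← abs_mul, ← abs_mul, ← hp, ← hq]
  exact le_antisymm (abs_add_abs_le (le_max_left _ _) (le_max_right _ _))
    (max_le (abs_add_le _ _) (abs_sub _ _))

lemma abs_add_add_abs_sub_le_two {a b b' e e' : 𝕜} (hadd : |a + b| ≤ 1 + e)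
    (hsub : |a - b| ≤ 1 - e) (hadd' : |a + b'| ≤ 1 + e') (hsub' : |a - b'| ≤ 1 - e') :
    |e + e'| + |b - b'| ≤ 2 := by
  have hsub_le : |b - b'| ≤ 2 - (e + e') := by
    linarith [abs_sub_le b a b', abs_sub_comm a b]
  have hadd_le : |b - b'| ≤ 2 + (e + e') := by
    have htri := abs_sub (a + b) (a + b')
    rw [add_sub_add_left_eq_sub] at htri
    linarith
  rcases abs_choice (e + e') with h | h <;> rw [h] <;> linarith

lemma exists_sum_eq_of_mem_Icc [Fintype ι] {l u : ι → 𝕜} (hlu : l ≤ u) {c : 𝕜}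
    (hc : c ∈ Set.Icc (∑ i, l i) (∑ i, u i)) : ∃ t ∈ Set.Icc l u, ∑ i, t i = c := by
  rw [← segment_eq_Icc (sum_le_sum fun i _ => hlu i)] at hc
  obtain ⟨r, s, hr, hs, hrs, rfl⟩ := hc
  exact ⟨r • l + s • u, convex_Icc l u ⟨le_rfl, hlu⟩ ⟨hlu, le_rfl⟩ hr hs hrs,
    by simp [sum_add_distrib, mul_sum]⟩

end OrderedField

lemma exists_forall_mem_Icc {α ι : Type*} [ConditionallyCompleteLattice α] [Finite ι] [Nonempty ι]
    {l u : ι → α} (h : ∀ i j, l i ≤ u j) : ∃ c, ∀ i, c ∈ Set.Icc (l i) (u i) :=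
  ⟨⨆ i, l i, fun j => ⟨le_ciSup (Set.finite_range l).bddAbove j, ciSup_le fun i => h i j⟩⟩

section Coupling

/-- The lower Fréchet bound: the least mass at `(+, +)` of a joint law with marginals `u`, `v`. -/
def frechetLower (u v : Bool → ℝ) : ℝ := max 0 (v true - u false)

/-- The upper Fréchet bound: the greatest mass at `(+, +)` of a joint law with marginals `u`,
`v`. -/
def frechetUpper (u v : Bool → ℝ) : ℝ := min (u true) (v true)

/-- The joint law with marginals `u`, `v` and mass `t` at `(+, +)`. The laws need not be normalised,
but the second marginal is `v` only if `u` and `v` have the same total mass. -/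
def coupling (u v : Bool → ℝ) (t : ℝ) : Bool × Bool → ℝ
  | (true, true) => t
  | (true, false) => u true - t
  | (false, true) => v true - t
  | (false, false) => u false - v true + t

lemma frechetLower_le_frechetUpper {u v : Bool → ℝ} (hu : 0 ≤ u) (hv : 0 ≤ v)
    (huv : ∑ b, u b = ∑ b, v b) : frechetLower u v ≤ frechetUpper u v := by
  have hvf := hv false
  simp only [Fintype.sum_bool, Pi.zero_apply] at huv hvf
  exact max_le (le_min (hu true) (hv true)) (le_min (by linarith) (sub_le_self _ (hu false)))

lemma frechetLower_eq (u v : Bool → ℝ) :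
    frechetLower u v = (v true - u false + |v true - u false|) / 2 := by
  rw [frechetLower, sup_eq_half_smul_add_add_abs_sub' ℝ, smul_eq_mul, zero_add, sub_zero]
  ring

lemma frechetUpper_eq (u v : Bool → ℝ) :
    frechetUpper u v = (u true + v true - |u true - v true|) / 2 := by
  rw [frechetUpper, inf_eq_half_smul_add_sub_abs_sub' ℝ, smul_eq_mul, abs_sub_comm]
  ring

lemma coupling_nonneg {u v : Bool → ℝ} {t : ℝ}
    (ht : t ∈ Set.Icc (frechetLower u v) (frechetUpper u v)) (l : Bool × Bool) :
    0 ≤ coupling u v t l := by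
  obtain ⟨h₀, hvu⟩ := max_le_iff.1 ht.1
  obtain ⟨hu, hv⟩ := le_min_iff.1 ht.2
  rcases l with ⟨_ | _, _ | _⟩ <;> simp only [coupling] <;> linarith

lemma sum_coupling_snd (u v : Bool → ℝ) (t : ℝ) (b : Bool) : ∑ c, coupling u v t (b, c) = u b := by
  cases b <;> simp only [Fintype.sum_bool, coupling] <;> ring

lemma sum_coupling_fst {u v : Bool → ℝ} (huv : ∑ b, u b = ∑ b, v b) (t : ℝ) (c : Bool) :
    ∑ b, coupling u v t (b, c) = v c := by
  simp only [Fintype.sum_bool] at huv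
  cases c <;> simp only [Fintype.sum_bool, coupling] <;> linarith

lemma sum_coupling {ι : Type*} (s : Finset ι) (u v : ι → Bool → ℝ) (t : ι → ℝ) (l : Bool × Bool) :
    ∑ i ∈ s, coupling (u i) (v i) (t i) l =
      coupling (fun b => ∑ i ∈ s, u i b) (fun b => ∑ i ∈ s, v i b) (∑ i ∈ s, t i) l := by
  rcases l with ⟨_ | _, _ | _⟩ <;> simp only [coupling, sum_add_distrib, sum_sub_distrib]

end Coupling

section LocalFree

variable {M N : ℕ} {Λ : Type*} [Fintype Λ] {P : Bool → Bool → Fin M → Fin N → ℝ}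

lemma localFree_of_fintype {q : Λ → ℝ} {A : Bool → Fin M → Λ → ℝ} {B : Bool → Fin N → Λ → ℝ}
    (hq : ∀ l, 0 ≤ q l) (hq_sum : ∑ l, q l = 1)
    (hA : ∀ a x l, 0 ≤ A a x l) (hA_sum : ∀ x l, ∑ a, A a x l = 1)
    (hB : ∀ b y l, 0 ≤ B b y l) (hB_sum : ∀ y l, ∑ b, B b y l = 1)
    (hP : ∀ a b x y, P a b x y = ∑ l, q l * A a x l * B b y l) : LocalFree P := by
  let e := (Fintype.equivFin Λ).symm
  exact ⟨_, q ∘ e, fun a x => A a x ∘ e, fun b y => B b y ∘ e, fun i => hq (e i),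
    (e.sum_comp q).trans hq_sum, fun a x i => hA a x (e i), fun x i => hA_sum x (e i),
    fun b y i => hB b y (e i), fun y i => hB_sum y (e i),
    fun a b x y => (hP a b x y).trans (e.sum_comp fun l => q l * A a x l * B b y l).symm⟩

lemma localFree_of_joint_s16 {w : Bool → Fin M → Λ → ℝ} {q : Λ → ℝ} {B : Bool → Fin N → Λ → ℝ}
    (hw : ∀ a x l, 0 ≤ w a x l) (hw_sum : ∀ x l, ∑ a, w a x l = q l)
    (hq : ∀ l, 0 ≤ q l) (hq_sum : ∑ l, q l = 1)
    (hB : ∀ b y l, 0 ≤ B b y l) (hB_sum : ∀ y l, ∑ b, B b y l = 1)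
    (hP : ∀ a b x y, P a b x y = ∑ l, w a x l * B b y l) : LocalFree P := by
  -- Where `q` vanishes the conditional law `w / q` is meaningless; the uniform law replaces it.
  let A : Bool → Fin M → Λ → ℝ := fun a x l => if q l = 0 then 1 / 2 else w a x l / q l
  have hqA : ∀ a x l, q l * A a x l = w a x l := by
    intro a x l
    by_cases hl : q l = 0
    · have hw_zero := (sum_eq_zero_iff_of_nonneg fun a _ => hw a x l).1 ((hw_sum x l).trans hl)
      rw [hl, zero_mul, hw_zero a (mem_univ a)]
    · simp only [A, if_neg hl, mul_div_cancel₀ _ hl]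
  refine localFree_of_fintype (A := A) hq hq_sum ?_ ?_ hB hB_sum ?_
  · intro a x l
    by_cases hl : q l = 0
    · simp only [A, if_pos hl, one_div_nonneg, zero_le_two]
    · simpa only [A, if_neg hl] using div_nonneg (hw a x l) (hq l)
  · intro x l
    by_cases hl : q l = 0
    · simp only [A, if_pos hl, Fintype.sum_bool, add_halves]
    · simp only [A, if_neg hl, ← sum_div, hw_sum, div_self hl]
  · simpa only [hqA] using hP

lemma localFree_of_joint_pair {P : Bool → Bool → Fin M → Fin 2 → ℝ}
    {w : Bool → Fin M → Bool × Bool → ℝ} {q : Bool × Bool → ℝ}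
    (hw : ∀ a x l, 0 ≤ w a x l) (hw_sum : ∀ x l, ∑ a, w a x l = q l)
    (hq : ∀ l, 0 ≤ q l) (hq_sum : ∑ l, q l = 1)
    (hP₀ : ∀ a b x, ∑ c, w a x (b, c) = P a b x 0)
    (hP₁ : ∀ a b x, ∑ c, w a x (c, b) = P a b x 1) : LocalFree P := by
  refine localFree_of_joint_s16 (B := fun b y l => if ![l.1, l.2] y = b then 1 else 0)
    hw hw_sum hq hq_sum (fun b y l => ?_) (fun y l => ?_) fun a b x y => ?_
  · split_ifs
    exacts [zero_le_one, le_rfl]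
  · rw [sum_ite_eq, if_pos (mem_univ _)]
  · fin_cases y
    · cases b <;> simp [← hP₀, Fintype.sum_prod_type]
    · cases b <;> simp [← hP₁, Fintype.sum_prod_type]

end LocalFree

section Means

variable {M N : ℕ} {P : Bool → Bool → Fin M → Fin N → ℝ}

/-- The expectation `⟨a⟩` of Alice's outcome, computed at the settings `x`, `y`. -/
def aliceMean (P : Bool → Bool → Fin M → Fin N → ℝ) (x : Fin M) (y : Fin N) : ℝ :=
  ∑ a, outVal a * ∑ b, P a b x y

/-- The expectation `⟨b⟩` of Bob's outcome, computed at the settings `x`, `y`. -/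
def bobMean (P : Bool → Bool → Fin M → Fin N → ℝ) (x : Fin M) (y : Fin N) : ℝ :=
  ∑ b, outVal b * ∑ a, P a b x y

lemma aliceMean_congr {y y' : Fin N} {x : Fin M} (h : ∀ a, ∑ b, P a b x y = ∑ b, P a b x y') :
    aliceMean P x y = aliceMean P x y' := by
  simp only [aliceMean, h]

lemma bobMean_congr {x x' : Fin M} {y : Fin N} (h : ∀ b, ∑ a, P a b x y = ∑ a, P a b x' y) :
    bobMean P x y = bobMean P x' y := by
  simp only [bobMean, h]

lemma four_mul_apply (hP : IsBehaviour P) (a b : Bool) (x : Fin M) (y : Fin N) :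
    4 * P a b x y = 1 + outVal a * aliceMean P x y + outVal b * bobMean P x y +
      outVal a * outVal b * corr P x y := by
  rw [← hP.2 x y]
  cases a <;> cases b <;>
    simp only [aliceMean, bobMean, corr, outVal, Fintype.sum_bool, if_true, Bool.false_eq_true,
      if_false] <;>
    ring

lemma abs_aliceMean_add_bobMean_le (hP : IsBehaviour P) (x : Fin M) (y : Fin N) :
    |aliceMean P x y + bobMean P x y| ≤ 1 + corr P x y := by
  have htt := four_mul_apply hP true true x y
  have hff := four_mul_apply hP false false x y
  simp only [outVal, if_true, Bool.false_eq_true, if_false] at htt hff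
  rw [abs_le]
  constructor <;> linarith [hP.1 true true x y, hP.1 false false x y]

lemma abs_aliceMean_sub_bobMean_le (hP : IsBehaviour P) (x : Fin M) (y : Fin N) :
    |aliceMean P x y - bobMean P x y| ≤ 1 - corr P x y := by
  have htf := four_mul_apply hP true false x y
  have hft := four_mul_apply hP false true x y
  simp only [outVal, if_true, Bool.false_eq_true, if_false] at htf hft
  rw [abs_le]
  constructor <;> linarith [hP.1 true false x y, hP.1 false true x y]

lemma abs_corr_le_one (hP : IsBehaviour P) (x : Fin M) (y : Fin N) : |corr P x y| ≤ 1 := by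
  have hadd := (abs_nonneg _).trans (abs_aliceMean_add_bobMean_le hP x y)
  have hsub := (abs_nonneg _).trans (abs_aliceMean_sub_bobMean_le hP x y)
  exact abs_le.2 ⟨by linarith, by linarith⟩

lemma abs_bobMean_le_one (hP : IsBehaviour P) (x : Fin M) (y : Fin N) : |bobMean P x y| ≤ 1 := by
  obtain ⟨_, _⟩ := abs_le.1 (abs_aliceMean_add_bobMean_le hP x y)
  obtain ⟨_, _⟩ := abs_le.1 (abs_aliceMean_sub_bobMean_le hP x y)
  exact abs_le.2 ⟨by linarith, by linarith⟩

lemma abs_corr_add_add_abs_bobMean_sub_le (hP : IsBehaviour P) {x : Fin M} {y y' : Fin N}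
    (h : ∀ a, ∑ b, P a b x y = ∑ b, P a b x y') :
    |corr P x y + corr P x y'| + |bobMean P x y - bobMean P x y'| ≤ 2 := by
  have hadd := abs_aliceMean_add_bobMean_le hP x y
  have hsub := abs_aliceMean_sub_bobMean_le hP x y
  rw [aliceMean_congr h] at hadd hsub
  exact abs_add_add_abs_sub_le_two hadd hsub (abs_aliceMean_add_bobMean_le hP x y')
    (abs_aliceMean_sub_bobMean_le hP x y')

-- This is the previous bound after flipping Bob's outcome at `y'`.
lemma abs_corr_sub_add_abs_bobMean_add_le (hP : IsBehaviour P) {x : Fin M} {y y' : Fin N}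
    (h : ∀ a, ∑ b, P a b x y = ∑ b, P a b x y') :
    |corr P x y - corr P x y'| + |bobMean P x y + bobMean P x y'| ≤ 2 := by
  have hadd := abs_aliceMean_add_bobMean_le hP x y
  have hsub := abs_aliceMean_sub_bobMean_le hP x y
  rw [aliceMean_congr h] at hadd hsub
  have hflip := abs_add_add_abs_sub_le_two hadd hsub (b' := -bobMean P x y') (e' := -corr P x y')
    (by simpa only [← sub_eq_add_neg] using abs_aliceMean_sub_bobMean_le hP x y')
    (by simpa only [sub_neg_eq_add] using abs_aliceMean_add_bobMean_le hP x y')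
  rwa [← sub_eq_add_neg, sub_neg_eq_add] at hflip

end Means

section FrechetSums

variable {M N : ℕ} {P : Bool → Bool → Fin M → Fin N → ℝ}

lemma four_mul_sum_frechetLower (hP : IsBehaviour P) {x : Fin M} {y y' : Fin N}
    (h : ∀ a, ∑ b, P a b x y = ∑ b, P a b x y') :
    4 * ∑ a, frechetLower (P a · x y) (P a · x y') =
      bobMean P x y + bobMean P x y' +
        max |bobMean P x y + bobMean P x y'| |corr P x y + corr P x y'| := by
  set S := bobMean P x y + bobMean P x y'
  set T := corr P x y + corr P x y'
  have hgap (a : Bool) : P a true x y' - P a false x y = (S + outVal a * T) / 4 := by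
    have htrue := four_mul_apply hP a true x y'
    have hfalse := four_mul_apply hP a false x y
    rw [aliceMean_congr h] at hfalse
    simp only [outVal, if_true, Bool.false_eq_true, if_false] at htrue hfalse ⊢
    linarith
  have habs := abs_add_add_abs_sub S T
  simp only [frechetLower_eq, hgap, Fintype.sum_bool, outVal, if_true, Bool.false_eq_true,
    if_false, one_mul, neg_one_mul, ← sub_eq_add_neg, abs_div, Nat.abs_ofNat]
  linarith

lemma four_mul_sum_frechetUpper (hP : IsBehaviour P) {x : Fin M} {y y' : Fin N}
    (h : ∀ a, ∑ b, P a b x y = ∑ b, P a b x y') :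
    4 * ∑ a, frechetUpper (P a · x y) (P a · x y') =
      2 + bobMean P x y + bobMean P x y' -
        max |bobMean P x y - bobMean P x y'| |corr P x y - corr P x y'| := by
  set D := bobMean P x y - bobMean P x y'
  set F := corr P x y - corr P x y'
  have hcell (a : Bool) := four_mul_apply hP a true x y
  have hcell' (a : Bool) := four_mul_apply hP a true x y'
  simp only [aliceMean_congr h, outVal, if_true] at hcell hcell'
  have hgap (a : Bool) : P a true x y - P a true x y' = (D + outVal a * F) / 4 := by
    simp only [outVal]
    linarith [hcell a, hcell' a]
  have habs := abs_add_add_abs_sub D F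
  simp only [frechetUpper_eq, hgap, Fintype.sum_bool, outVal, if_true, Bool.false_eq_true,
    if_false, one_mul, neg_one_mul, ← sub_eq_add_neg, abs_div, Nat.abs_ofNat]
  have htrue := hcell true
  have htrue' := hcell' true
  have hfalse := hcell false
  have hfalse' := hcell' false
  simp only [if_true, Bool.false_eq_true, if_false] at htrue htrue' hfalse hfalse'
  linarith

end FrechetSums

section Fine

variable {M : ℕ} {P : Bool → Bool → Fin M → Fin 2 → ℝ}

/-- The CHSH inequalities for Bob's two settings and every pair of Alice's settings. Since
`|p| + |q|` is the maximum of `±p ± q`, each ordered pair accounts for two of the four CHSH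
expressions, those with the minus sign at `x'`. -/
def SatisfiesCHSH (P : Bool → Bool → Fin M → Fin 2 → ℝ) : Prop :=
  ∀ x x', x ≠ x' → |corr P x 0 + corr P x 1| + |corr P x' 0 - corr P x' 1| ≤ 2

lemma SatisfiesCHSH.abs_corr_add_add_abs_corr_sub_le (h : SatisfiesCHSH P) (hP : IsBehaviour P)
    (x x' : Fin M) : |corr P x 0 + corr P x 1| + |corr P x' 0 - corr P x' 1| ≤ 2 := by
  rcases eq_or_ne x x' with rfl | hx
  · linarith [abs_add_add_abs_sub (corr P x 0) (corr P x 1),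
      max_le (abs_corr_le_one hP x 0) (abs_corr_le_one hP x 1)]
  · exact h x x' hx

lemma sum_frechetLower_le_sum_frechetUpper (hP : IsBehaviour P)
    (hA : ∀ a x y y', ∑ b, P a b x y = ∑ b, P a b x y')
    (hB : ∀ b y x x', ∑ a, P a b x y = ∑ a, P a b x' y) (hCHSH : SatisfiesCHSH P) (x x' : Fin M) :
    ∑ a, frechetLower (P a · x 0) (P a · x 1) ≤ ∑ a, frechetUpper (P a · x' 0) (P a · x' 1) := by
  have hB₀ : bobMean P x 0 = bobMean P x' 0 := bobMean_congr fun b => hB b 0 x x'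
  have hB₁ : bobMean P x 1 = bobMean P x' 1 := bobMean_congr fun b => hB b 1 x x'
  suffices max |bobMean P x 0 + bobMean P x 1| |corr P x 0 + corr P x 1| +
      max |bobMean P x' 0 - bobMean P x' 1| |corr P x' 0 - corr P x' 1| ≤ 2 by
    linarith [four_mul_sum_frechetLower hP fun a => hA a x 0 1,
      four_mul_sum_frechetUpper hP fun a => hA a x' 0 1]
  have hBB : |bobMean P x 0 + bobMean P x 1| + |bobMean P x' 0 - bobMean P x' 1| ≤ 2 := by
    rw [← hB₀, ← hB₁, abs_add_add_abs_sub]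
    linarith [max_le (abs_bobMean_le_one hP x 0) (abs_bobMean_le_one hP x 1)]
  have hBE : |bobMean P x 0 + bobMean P x 1| + |corr P x' 0 - corr P x' 1| ≤ 2 := by
    rw [hB₀, hB₁, add_comm]
    exact abs_corr_sub_add_abs_bobMean_add_le hP fun a => hA a x' 0 1
  have hEB : |corr P x 0 + corr P x 1| + |bobMean P x' 0 - bobMean P x' 1| ≤ 2 := by
    rw [← hB₀, ← hB₁]
    exact abs_corr_add_add_abs_bobMean_sub_le hP fun a => hA a x 0 1
  have hEE := hCHSH.abs_corr_add_add_abs_corr_sub_le hP x x'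
  rw [max_add, add_max, add_max]
  exact max_le (max_le hBB hBE) (max_le hEB hEE)

lemma satisfiesCHSH_of_abs_S_le {P : Bool → Bool → Fin 2 → Fin 2 → ℝ}
    (h1 : |S1 P| ≤ 2) (h2 : |S2 P| ≤ 2) (h3 : |S3 P| ≤ 2) (h4 : |S4 P| ≤ 2) :
    SatisfiesCHSH P := by
  have hS1 : corr P 0 0 + corr P 0 1 + (corr P 1 0 - corr P 1 1) = S1 P := by unfold S1; ring
  have hS2 : corr P 0 0 + corr P 0 1 - (corr P 1 0 - corr P 1 1) = S2 P := by unfold S2; ring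
  have hS3 : corr P 1 0 + corr P 1 1 + (corr P 0 0 - corr P 0 1) = S3 P := by unfold S3; ring
  have hS4 : corr P 1 0 + corr P 1 1 - (corr P 0 0 - corr P 0 1) = S4 P := by unfold S4; ring
  have h01 := abs_add_abs_le (hS1 ▸ h1) (hS2 ▸ h2)
  have h10 := abs_add_abs_le (hS3 ▸ h3) (hS4 ▸ h4)
  intro x x' hx
  fin_cases x <;> fin_cases x'
  exacts [absurd rfl hx, h01, h10, absurd rfl hx]

theorem fine_sufficiency_general [NeZero M] (hP : IsBehaviour P)
    (hA : ∀ a x y y', ∑ b, P a b x y = ∑ b, P a b x y')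
    (hB : ∀ b y x x', ∑ a, P a b x y = ∑ a, P a b x' y) (hCHSH : SatisfiesCHSH P) :
    LocalFree P := by
  obtain ⟨c, hc⟩ :=
    exists_forall_mem_Icc (sum_frechetLower_le_sum_frechetUpper hP hA hB hCHSH)
  have hle (x : Fin M) (a : Bool) :
      frechetLower (P a · x 0) (P a · x 1) ≤ frechetUpper (P a · x 0) (P a · x 1) :=
    frechetLower_le_frechetUpper (fun b => hP.1 a b x 0) (fun b => hP.1 a b x 1) (hA a x 0 1)
  choose T hT hTc using fun x => exists_sum_eq_of_mem_Icc (hle x) (hc x)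
  let w (a : Bool) (x : Fin M) := coupling (P a · x 0) (P a · x 1) (T x a)
  let q := coupling (fun b => ∑ a, P a b 0 0) (fun b => ∑ a, P a b 0 1) c
  have hw a x l : 0 ≤ w a x l := coupling_nonneg ⟨(hT x).1 a, (hT x).2 a⟩ l
  have hw_sum x l : ∑ a, w a x l = q l := by
    simp only [w, q, sum_coupling, hTc, hB _ _ x 0]
  have hq_sum : ∑ l, q l = 1 := by
    simp only [q, Fintype.sum_prod_type, sum_coupling_snd]
    rw [sum_comm, hP.2 0 0]
  exact localFree_of_joint_pair hw hw_sum (fun l => hw_sum 0 l ▸ sum_nonneg fun a _ => hw a 0 l)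
    hq_sum (fun a b x => sum_coupling_snd _ _ _ b) fun a b x => sum_coupling_fst (hA a x 0 1) _ b

end Fine

theorem fine_sufficiency (P : Bool → Bool → Fin 2 → Fin 2 → ℝ)
    (hP : IsBehaviour P) (hNS : NonSignalling P)
    (h1 : |S1 P| ≤ 2) (h2 : |S2 P| ≤ 2) (h3 : |S3 P| ≤ 2) (h4 : |S4 P| ≤ 2) :
    LocalFree P :=
  fine_sufficiency_general hP hNS.1 hNS.2 (satisfiesCHSH_of_abs_S_le h1 h2 h3 h4)
end
end
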